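/- arXiv:2309.13768 — 3 statements merged into one kernel-verified Lean document; each statement's English description precedes it below -/
import Mathlib

section
/- Let n ≥ 1. Let Ω₁ = 𝔹^{n₁} × ⋯ × 𝔹^{n_l} ⊆ ℂⁿ with generic norm ρ₁(z) = ∏_{i=1}^l (1−‖z⁽ⁱ⁾‖²)^{p_i} (positive integer exponents with some p_{i₀} = 1), and Ω₂ = 𝔹^{m₁} × ⋯ × 𝔹^{m_{l'}} ⊆ ℂⁿ with generic norm ρ₂(w) = ∏_{j=1}^{l'} (1−‖w⁽ʲ⁾‖²)^{q_j} (positive integer exponents with some q_{j₀} = 1), where n₁+⋯+n_l = m₁+⋯+m_{l'} = n. Assume l ≥ 2 or l' ≥ 2 (i.e., Ω₁ or Ω₂ has rank at least two). Let Σ₁, Σ₂ ⊆ ℂ^{n+1} be the corresponding circle bundles. Let U ⊆ ℂ^{n+1} be a connected open set with U ∩ Σ₁ ≠ ∅ and let F : U → ℂ^{n+1} be a nonconstant holomorphic map with F(U ∩ Σ₁) ⊆ Σ₂. Then there exist a biholomorphism ψ : Ω₁ → Ω₂ and a holomorphic function φ : Ω₁ → ℂ with φ(z) ≠ 0 for all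 z ∈ Ω₁, such that ρ₂(ψ(z)) = |φ(z)|² ρ₁(z) for all z ∈ Ω₁ and the map G(z,ξ) = (ψ(z), ξ·φ(z)) coincides with F on some nonempty open subset of U. -/
noncomputable section

open Complex

/-- `Biholo f s t`: `f` is a biholomorphism from `s` onto `t`. -/
def Biholo {E F : Type*} [NormedAddCommGroup E] [NormedSpace ℂ E]
    [NormedAddCommGroup F] [NormedSpace ℂ F]
    (f : E → F) (s : Set E) (t : Set F) : Prop :=
  DifferentiableOn ℂ f s ∧ Set.MapsTo f s t ∧
    ∃ g : F → E, DifferentiableOn ℂ g t ∧ Set.MapsTo g t s ∧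
      Set.LeftInvOn g f s ∧ Set.RightInvOn g f t

/-- The squared Hermitian norm of the `i`-th block of coordinates `z` of `ℂⁿ`. -/
def blockSq {n l : ℕ} (β : Fin n → Fin l) (i : Fin l) (z : Fin n → ℂ) : ℝ :=
  ∑ j ∈ Finset.univ.filter (fun j => β j = i), Complex.normSq (z j)

/-- The product of balls `𝔹^{n₁} × ⋯ × 𝔹^{n_l} ⊆ ℂⁿ` determined by `β`. -/
def prodBalls {n l : ℕ} (β : Fin n → Fin l) : Set (Fin n → ℂ) :=
  {z | ∀ i, blockSq β i z < 1}

/-- The generalized generic norm `ρ(z) = ∏ᵢ (1 − ‖z⁽ⁱ⁾‖²)^{pᵢ}`. -/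
def gnorm {n l : ℕ} (β : Fin n → Fin l) (p : Fin l → ℕ) (z : Fin n → ℂ) : ℝ :=
  ∏ i, (1 - blockSq β i z) ^ (p i)

/-- The circle bundle `Σ(Ω, ρ) = {(z,ξ) ∈ Ω × ℂ : |ξ|² = ρ(z)}`. -/
def circBundle {n l : ℕ} (β : Fin n → Fin l) (p : Fin l → ℕ) : Set ((Fin n → ℂ) × ℂ) :=
  {P | P.1 ∈ prodBalls β ∧ Complex.normSq P.2 = gnorm β p P.1}

open Filter Topology ComplexConjugate

/-
In the fibre coordinate `s = log ξ` a circle bundle is `s + conj s = log ρ(z)`. Its polarization,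
the Segre variety `s + t = log ρ(z, w)`, is preserved by the pair of `F` and its conjugate, and the
automorphisms of the balls lift, so every point of the circle bundle can be moved to `(0, 0)`. There
the derivative of `F` has a fibre scale `r` and a base part `A`, and the expansion of `log ρ` to
fourth order shows that `A` multiplies the form `∑ pᵢ ⟨z⁽ⁱ⁾, w⁽ⁱ⁾⟩` by `r` and, if `r ≠ 0`, also
`∑ pᵢ ⟨z⁽ⁱ⁾, w⁽ⁱ⁾⟩²` on orthogonal pairs. The supremum of the latter over orthonormal pairs is
positive exactly in rank at least two, and then determines `r`.

If `r = 0` at all nearby points, `F` is constant. Otherwise `r` is locally constant, which forces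
`F` to be `(z, s) ↦ (A z, r s)` in recentred coordinates. The Taylor coefficients of `log ρ` then
give `∑ qⱼ ‖(Az)⁽ʲ⁾‖²ᵏ = r ∑ pᵢ ‖z⁽ⁱ⁾‖²ᵏ` for all `k`. As `k` grows, an exponent equal to one yields
`r ≥ 1` and, applied to the inverse, `r ≤ 1`; so `A` preserves the generic norm.
-/

section Holomorphy
variable {G H : Type*} [NormedAddCommGroup G] [NormedSpace ℂ G]
  [NormedAddCommGroup H] [NormedSpace ℂ H] {f : G → H} {x₀ : G}

lemma exists_eventually_norm_fderiv_le (hf : ∀ᶠ x in 𝓝 x₀, DifferentiableAt ℂ f x) :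
    ∃ C, ∀ᶠ x in 𝓝 x₀, ‖fderiv ℂ f x‖ ≤ C := by
  have hclose : ∀ᶠ x in 𝓝 x₀, dist (f x) (f x₀) < 1 :=
    hf.self_of_nhds.continuousAt.eventually (Metric.ball_mem_nhds _ one_pos)
  obtain ⟨r, hr, hball⟩ := Metric.eventually_nhds_iff_ball.1 (hf.and hclose)
  refine ⟨2 / (r / 2), Metric.eventually_nhds_iff_ball.2 ⟨r / 2, half_pos hr, fun x hx => ?_⟩⟩
  have hsub : Metric.ball x (r / 2) ⊆ Metric.ball x₀ r :=
    Metric.ball_subset_ball' (by linarith [Metric.mem_ball.1 hx])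
  refine norm_fderiv_le_div_of_mapsTo_ball
    (fun y hy => (hball y (hsub hy)).1.differentiableWithinAt) (fun y hy => ?_) (half_pos hr)
  have hxr := (hball x (hsub (Metric.mem_ball_self (half_pos hr)))).2
  have hyr := (hball y (hsub hy)).2
  rw [Metric.mem_closedBall]
  linarith [dist_triangle_right (f y) (f x) (f x₀)]

lemma differentiableAt_intervalIntegral_smul_comp_add [FiniteDimensional ℂ G]
    [FiniteDimensional ℂ H] {κ : ℝ → ℂ} {γ : ℝ → G} {r ρ C a b : ℝ} (hκ : Continuous κ)
    (hγ : Continuous γ) (hγρ : ∀ t, ‖γ t‖ ≤ ρ) (hρ : ρ < r)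
    (hd : ∀ x ∈ Metric.ball x₀ r, DifferentiableAt ℂ f x)
    (hC : ∀ x ∈ Metric.ball x₀ r, ‖fderiv ℂ f x‖ ≤ C) :
    DifferentiableAt ℂ (fun x => ∫ t in a..b, κ t • f (x + γ t)) x₀ := by
  have hmem : ∀ x ∈ Metric.ball x₀ (r - ρ), ∀ t, x + γ t ∈ Metric.ball x₀ r := by
    intro x hx t
    rw [mem_ball_iff_norm] at hx ⊢
    rw [add_sub_right_comm]
    linarith [norm_add_le (x - x₀) (γ t), hγρ t]
  have hnhds : Metric.ball x₀ (r - ρ) ∈ 𝓝 x₀ := Metric.ball_mem_nhds _ (sub_pos.2 hρ)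
  have hcont : ∀ x ∈ Metric.ball x₀ (r - ρ), Continuous fun t => κ t • f (x + γ t) :=
    fun x hx => hκ.smul (continuous_iff_continuousAt.2 fun t =>
      (hd _ (hmem x hx t)).continuousAt.comp (f := fun t => x + γ t) (by fun_prop))
  borelize G
  borelize H
  borelize (G →L[ℂ] H)
  refine (intervalIntegral.hasFDerivAt_integral_of_dominated_of_fderiv_le (𝕜 := ℂ)
    (F' := fun x t => κ t • fderiv ℂ f (x + γ t)) (bound := fun t => ‖κ t‖ * C) hnhds
    ?_ ?_ ?_ ?_ ?_ ?_).differentiableAt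
  · filter_upwards [hnhds] with x hx using (hcont x hx).aestronglyMeasurable
  · exact (hcont x₀ (mem_of_mem_nhds hnhds)).intervalIntegrable _ _
  · exact hκ.aestronglyMeasurable.smul
      ((measurable_fderiv ℂ f).comp (hγ.const_add x₀).measurable).aestronglyMeasurable
  · refine Eventually.of_forall fun t _ x hx => ?_
    rw [norm_smul]
    exact mul_le_mul_of_nonneg_left (hC _ (hmem x hx t)) (norm_nonneg _)
  · exact (hκ.norm.mul continuous_const).intervalIntegrable _ _
  · exact Eventually.of_forall fun t _ x hx =>
      ((hasFDerivAt_comp_add_right (γ t)).2 (hd _ (hmem x hx t)).hasFDerivAt).const_smul _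

lemma fderiv_apply_eq_circleIntegral [CompleteSpace H] {x v : G} {ρ : ℝ} (hρ : 0 < ρ)
    (hd : ∀ ζ ∈ Metric.closedBall (0 : ℂ) ρ, DifferentiableAt ℂ f (x + ζ • v)) :
    fderiv ℂ f x v = (2 * Real.pi * I : ℂ)⁻¹ • ∮ ζ in C(0, ρ), (1 / ζ ^ 2) • f (x + ζ • v) := by
  have hline : DifferentiableOn ℂ (fun ζ : ℂ => f (x + ζ • v)) (Metric.closedBall 0 ρ) :=
    fun ζ hζ => ((hd ζ hζ).comp ζ (f := fun ζ : ℂ => x + ζ • v)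
      (by fun_prop)).differentiableWithinAt
  have hx : DifferentiableAt ℂ f x := by simpa using hd 0 (Metric.mem_closedBall_self hρ.le)
  have hcauchy := hline.deriv_eq_smul_circleIntegral hρ
  simp only [sub_zero] at hcauchy
  rw [hcauchy, inv_smul_smul₀ two_pi_I_ne_zero, ← hx.lineDeriv_eq_fderiv, lineDeriv]

lemma differentiableAt_fderiv_apply [FiniteDimensional ℂ G] [FiniteDimensional ℂ H]
    (hf : ∀ᶠ x in 𝓝 x₀, DifferentiableAt ℂ f x) (v : G) :
    DifferentiableAt ℂ (fun x => fderiv ℂ f x v) x₀ := by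
  have : CompleteSpace H := FiniteDimensional.complete ℂ H
  obtain ⟨C, hC⟩ := exists_eventually_norm_fderiv_le hf
  obtain ⟨r, hr, hball⟩ := Metric.eventually_nhds_iff_ball.1 (hf.and hC)
  obtain ⟨ρ, hρ, hρr⟩ : ∃ ρ, 0 < ρ ∧ ρ * ‖v‖ < r :=
    ⟨r / (2 * (‖v‖ + 1)), by positivity, by
      rw [div_mul_eq_mul_div, div_lt_iff₀ (by positivity)]; nlinarith [norm_nonneg v]⟩
  have hcauchy : (fun x => fderiv ℂ f x v) =ᶠ[𝓝 x₀] fun x => (2 * Real.pi * I : ℂ)⁻¹ •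
      ∮ ζ in C(0, ρ), (1 / ζ ^ 2) • f (x + ζ • v) := by
    filter_upwards [Metric.ball_mem_nhds x₀ (sub_pos.2 hρr)] with x hx
    refine fderiv_apply_eq_circleIntegral hρ fun ζ hζ => (hball _ ?_).1
    rw [mem_closedBall_zero_iff] at hζ
    rw [mem_ball_iff_norm] at hx ⊢
    have hζv : ‖ζ • v‖ ≤ ρ * ‖v‖ := by rw [norm_smul]; gcongr
    rw [add_sub_right_comm]
    linarith [norm_add_le (x - x₀) (ζ • v)]
  refine DifferentiableAt.congr_of_eventuallyEq (DifferentiableAt.const_smul ?_ _) hcauchy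
  have hcirc : ∀ t, circleMap 0 ρ t ^ 2 ≠ 0 := fun t =>
    pow_ne_zero 2 (circleMap_ne_center hρ.ne')
  have hint := differentiableAt_intervalIntegral_smul_comp_add (f := f) (a := 0) (b := 2 * Real.pi)
    (κ := fun t => circleMap 0 ρ t * I * (1 / circleMap 0 ρ t ^ 2))
    (γ := fun t => circleMap 0 ρ t • v) (by fun_prop (disch := exact hcirc)) (by fun_prop)
    (fun t => by rw [norm_smul, norm_circleMap_zero, abs_of_pos hρ]) hρr
    (fun x hx => (hball x hx).1) (fun x hx => (hball x hx).2)
  simpa only [circleIntegral, deriv_circleMap, smul_smul] using hint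

lemma differentiableAt_fderiv [FiniteDimensional ℂ G] [FiniteDimensional ℂ H]
    (hf : ∀ᶠ x in 𝓝 x₀, DifferentiableAt ℂ f x) : DifferentiableAt ℂ (fderiv ℂ f) x₀ := by
  let b := Module.finBasis ℂ G
  let e : (G →L[ℂ] H) ≃L[ℂ] (Fin (Module.finrank ℂ G) → H) :=
    (LinearMap.toContinuousLinearMap.symm.trans (b.constr ℂ).symm).toContinuousLinearEquiv
  refine e.comp_differentiableAt_iff.1 (differentiableAt_pi.2 fun i => ?_)
  exact differentiableAt_fderiv_apply hf (b i)

lemma eventually_differentiableAt_fderiv [FiniteDimensional ℂ G] [FiniteDimensional ℂ H]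
    (hf : ∀ᶠ x in 𝓝 x₀, DifferentiableAt ℂ f x) :
    ∀ᶠ x in 𝓝 x₀, DifferentiableAt ℂ (fderiv ℂ f) x :=
  hf.eventually_nhds.mono fun _ => differentiableAt_fderiv

lemma hasStrictFDerivAt_of_eventually [FiniteDimensional ℂ G] [FiniteDimensional ℂ H]
    (hf : ∀ᶠ x in 𝓝 x₀, DifferentiableAt ℂ f x) : HasStrictFDerivAt f (fderiv ℂ f x₀) x₀ :=
  hasStrictFDerivAt_of_hasFDerivAt_of_continuousAt (hf.mono fun _ => DifferentiableAt.hasFDerivAt)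
    (differentiableAt_fderiv hf).continuousAt

lemma eqOn_zero_of_forall_ofReal [CompleteSpace H] {g : ℂ → H} {R : ℝ}
    (hg : DifferentiableOn ℂ g (Metric.ball 0 R))
    (h0 : ∀ t : ℝ, |t| < R → g t = 0) : Set.EqOn g 0 (Metric.ball 0 R) := by
  intro w hw
  have hR : 0 < R := Metric.pos_of_mem_ball hw
  refine (hg.analyticOnNhd Metric.isOpen_ball).eqOn_zero_of_preconnected_of_frequently_eq_zero
    (convex_ball 0 R).isPreconnected (Metric.mem_ball_self hR) ?_ hw
  have hreal : ∃ᶠ t : ℝ in 𝓝[≠] (0 : ℝ), g t = 0 := by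
    refine Eventually.frequently ?_
    filter_upwards [nhdsWithin_le_nhds (Metric.ball_mem_nhds (0 : ℝ) hR)] with t ht
    exact h0 t (by simpa using ht)
  have hcast : Tendsto (fun t : ℝ => (t : ℂ)) (𝓝[≠] 0) (𝓝[≠] 0) := by
    refine tendsto_nhdsWithin_iff.2
      ⟨(continuous_ofReal.tendsto' 0 0 ofReal_zero).mono_left nhdsWithin_le_nhds, ?_⟩
    filter_upwards [self_mem_nhdsWithin] with t ht using ofReal_ne_zero.2 ht
  exact hcast.frequently hreal

lemma exists_fixed_add_I_smul (σ : G →L⋆[ℂ] G) (hσ : ∀ x, σ (σ x) = x) :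
    ∃ A B : G → G, Continuous A ∧ Continuous B ∧ A 0 = 0 ∧ B 0 = 0 ∧
      ∀ x, σ (A x) = A x ∧ σ (B x) = B x ∧ A x + I • B x = x := by
  refine ⟨fun x => (2⁻¹ : ℂ) • (x + σ x), fun x => (2⁻¹ * I : ℂ) • (σ x - x), by fun_prop,
    by fun_prop, by simp, by simp, fun x => ⟨?_, ?_, ?_⟩⟩
  · simp [hσ, add_comm, map_ofNat]
  · simp [hσ, smul_sub, map_ofNat, neg_add_eq_sub]
  · have hI : I * (2⁻¹ * I) = -2⁻¹ := by linear_combination 2⁻¹ * I_mul_I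
    rw [smul_smul, hI]
    module

lemma eventually_eq_zero_of_fixed [CompleteSpace H] {Φ : G → H} (σ : G →L⋆[ℂ] G)
    (hσ : ∀ x, σ (σ x) = x) (hΦ : ∀ᶠ x in 𝓝 0, DifferentiableAt ℂ Φ x)
    (h0 : ∀ᶠ x in 𝓝 0, σ x = x → Φ x = 0) : ∀ᶠ x in 𝓝 0, Φ x = 0 := by
  obtain ⟨A, B, hA, hB, hA0, hB0, hAB⟩ := exists_fixed_add_I_smul σ hσ
  obtain ⟨r, hr, hball⟩ := Metric.eventually_nhds_iff_ball.1 (hΦ.and h0)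
  have hsmall : ∀ᶠ x in 𝓝 0, ‖A x‖ + 2 * ‖B x‖ < r := by
    refine ContinuousAt.eventually_lt (by fun_prop) continuousAt_const ?_
    simpa [hA0, hB0] using hr
  filter_upwards [hsmall] with x hx
  obtain ⟨hAx, hBx, hx'⟩ := hAB x
  have hmem : ∀ t ∈ Metric.ball (0 : ℂ) 2, A x + t • B x ∈ Metric.ball (0 : G) r := by
    intro t ht
    rw [mem_ball_zero_iff] at ht ⊢
    refine (norm_add_le _ _).trans_lt ?_
    rw [norm_smul]
    nlinarith [norm_nonneg (B x)]
  have hline := eqOn_zero_of_forall_ofReal (g := fun t => Φ (A x + t • B x)) (R := 2)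
    (fun t ht => ((hball _ (hmem t ht)).1.comp t (f := fun t : ℂ => A x + t • B x)
      (by fun_prop)).differentiableWithinAt)
    (fun t ht => (hball _ (hmem t (by simpa using ht))).2 (by
      rw [map_add, map_smulₛₗ, hAx, hBx, conj_ofReal]))
    (show I ∈ Metric.ball (0 : ℂ) 2 by simp)
  simpa [hx'] using hline

lemma eventually_eq_of_fderiv_eq_zero (hf : ∀ᶠ x in 𝓝 x₀, DifferentiableAt ℂ f x)
    (h0 : ∀ᶠ x in 𝓝 x₀, fderiv ℂ f x = 0) : ∀ᶠ x in 𝓝 x₀, f x = f x₀ := by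
  obtain ⟨r, hr, hball⟩ := Metric.eventually_nhds_iff_ball.1 (hf.and h0)
  refine Metric.eventually_nhds_iff_ball.2 ⟨r, hr, fun x hx => ?_⟩
  exact Metric.isOpen_ball.is_const_of_fderiv_eq_zero (𝕜 := ℂ)
    (Metric.isConnected_ball hr).isPreconnected
    (fun y hy => (hball y hy).1.differentiableWithinAt) (fun y hy => (hball y hy).2) hx
    (Metric.mem_ball_self hr)

lemma eventually_eq_of_fderiv_comp_inr_eq_zero {F : Type*} [NormedAddCommGroup F]
    [NormedSpace ℂ F] {f : G × F → H} {x₀ : G × F} (hf : ∀ᶠ x in 𝓝 x₀, DifferentiableAt ℂ f x)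
    (h0 : ∀ᶠ x in 𝓝 x₀, fderiv ℂ f x ∘L .inr ℂ G F = 0) :
    ∀ᶠ x in 𝓝 x₀, f x = f (x.1, x₀.2) := by
  obtain ⟨r, hr, hball⟩ := Metric.eventually_nhds_iff_ball.1 (hf.and h0)
  refine Metric.eventually_nhds_iff_ball.2 ⟨r, hr, fun x hx => ?_⟩
  rw [← ball_prod_same, Set.mem_prod] at hx
  have hfibre : ∀ y ∈ Metric.ball x₀.2 r,
      HasFDerivAt (𝕜 := ℂ) (fun y => f (x.1, y)) (0 : F →L[ℂ] H) y := by
    intro y hy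
    obtain ⟨hd, hv⟩ := hball (x.1, y) (by rw [← ball_prod_same]; exact ⟨hx.1, hy⟩)
    rw [← hv]
    exact hd.hasFDerivAt.comp y (hasFDerivAt_prodMk_right x.1 y)
  exact Metric.isOpen_ball.is_const_of_fderiv_eq_zero (𝕜 := ℂ) (f := fun y => f (x.1, y))
    (Metric.isConnected_ball hr).isPreconnected
    (fun y hy => (hfibre y hy).differentiableAt.differentiableWithinAt)
    (fun y hy => (hfibre y hy).fderiv) hx.2 (Metric.mem_ball_self hr)

lemma eqOn_const_ball_of_eventually_eq [CompleteSpace H] {y : G} {r : ℝ} {c : H}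
    (hf : ∀ x ∈ Metric.ball y r, DifferentiableAt ℂ f x) (h0 : ∀ᶠ x in 𝓝 y, f x = c) :
    Set.EqOn f (fun _ => c) (Metric.ball y r) := by
  intro w hw
  have hr : 0 < r := Metric.pos_of_mem_ball hw
  obtain ⟨R, hR, hRw⟩ : ∃ R, 1 < R ∧ R * ‖w - y‖ < r := by
    have hwr := mem_ball_iff_norm.1 hw
    refine ⟨1 + (r - ‖w - y‖) / (2 * r), by linarith [div_pos (sub_pos.2 hwr) (mul_pos two_pos hr)],
      ?_⟩
    field_simp
    nlinarith [norm_nonneg (w - y)]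
  have hmem : ∀ t ∈ Metric.ball (0 : ℂ) R, y + t • (w - y) ∈ Metric.ball y r := by
    intro t ht
    rw [mem_ball_zero_iff] at ht
    rw [mem_ball_iff_norm, add_sub_cancel_left, norm_smul]
    nlinarith [norm_nonneg (w - y)]
  have hline : AnalyticOnNhd ℂ (fun t : ℂ => f (y + t • (w - y))) (Metric.ball 0 R) :=
    DifferentiableOn.analyticOnNhd (fun t ht => ((hf _ (hmem t ht)).comp t
      (f := fun t : ℂ => y + t • (w - y)) (by fun_prop)).differentiableWithinAt) Metric.isOpen_ball
  have htend : Tendsto (fun t : ℂ => y + t • (w - y)) (𝓝 0) (𝓝 y) :=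
    Continuous.tendsto' (by fun_prop) _ _ (by simp)
  have heq := hline.eqOn_of_preconnected_of_eventuallyEq (g := fun _ => c) analyticOnNhd_const
    (convex_ball 0 R).isPreconnected (Metric.mem_ball_self (one_pos.trans hR))
    (htend.eventually h0) (show (1 : ℂ) ∈ Metric.ball 0 R by simpa using hR)
  simpa using heq

lemma eqOn_const_of_eventually_eq [CompleteSpace H] {U : Set G} {c : H} (hU : IsOpen U)
    (hUc : IsPreconnected U) (hf : DifferentiableOn ℂ f U) (hx₀ : x₀ ∈ U)
    (h0 : ∀ᶠ x in 𝓝 x₀, f x = c) : Set.EqOn f (fun _ => c) U := by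
  suffices hsub : U ⊆ {x | ∀ᶠ y in 𝓝 x, f y = c} from fun x hx => (hsub hx).self_of_nhds
  refine hUc.subset_of_closure_inter_subset
    (isOpen_iff_mem_nhds.2 fun x hx => hx.eventually_nhds) ⟨x₀, hx₀, h0⟩ ?_
  rintro x ⟨hxS, hxU⟩
  obtain ⟨r, hr, hball⟩ := Metric.isOpen_iff.1 hU x hxU
  obtain ⟨y, hyS, hxy⟩ := Metric.mem_closure_iff.1 hxS (r / 2) (half_pos hr)
  have hsub : Metric.ball y (r / 2) ⊆ U :=
    (Metric.ball_subset_ball' (by rw [dist_comm]; linarith)).trans hball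
  filter_upwards [Metric.isOpen_ball.mem_nhds (Metric.mem_ball.2 hxy)] with w hw
  exact eqOn_const_ball_of_eventually_eq
    (fun z hz => hf.differentiableAt (hU.mem_nhds (hsub hz))) hyS hw

end Holomorphy

section BlockPairing
variable {n l : ℕ} {β : Fin n → Fin l} {i : Fin l} {z w : Fin n → ℂ}

/-- The complex bilinear pairing of the `i`-th blocks; `blockDot β i z (star w)` is the Hermitian
inner product of the `i`-th blocks of `z` and `w`. -/
def blockDot (β : Fin n → Fin l) (i : Fin l) : (Fin n → ℂ) →L[ℂ] (Fin n → ℂ) →L[ℂ] ℂ :=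
  ∑ j ∈ Finset.univ.filter (fun j => β j = i),
    (ContinuousLinearMap.proj (R := ℂ) j).smulRight (ContinuousLinearMap.proj (R := ℂ) j)

lemma blockDot_apply (β : Fin n → Fin l) (i : Fin l) (z w : Fin n → ℂ) :
    blockDot β i z w = ∑ j ∈ Finset.univ.filter (fun j => β j = i), z j * w j := by
  simp [blockDot]

lemma blockDot_comm (β : Fin n → Fin l) (i : Fin l) (z w : Fin n → ℂ) :
    blockDot β i z w = blockDot β i w z := by
  simp only [blockDot_apply, mul_comm]

lemma conj_blockDot (β : Fin n → Fin l) (i : Fin l) (z w : Fin n → ℂ) :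
    conj (blockDot β i z w) = blockDot β i (star z) (star w) := by
  simp [blockDot_apply]

lemma blockDot_self_star (β : Fin n → Fin l) (i : Fin l) (z : Fin n → ℂ) :
    blockDot β i z (star z) = (blockSq β i z : ℂ) := by
  simp [blockDot_apply, blockSq, mul_conj]

lemma blockSq_nonneg (β : Fin n → Fin l) (i : Fin l) (z : Fin n → ℂ) : 0 ≤ blockSq β i z :=
  Finset.sum_nonneg fun _ _ => normSq_nonneg _

lemma blockSq_star (β : Fin n → Fin l) (i : Fin l) (z : Fin n → ℂ) :
    blockSq β i (star z) = blockSq β i z := by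
  simp [blockSq]

lemma norm_blockDot_sq_le (β : Fin n → Fin l) (i : Fin l) (z w : Fin n → ℂ) :
    ‖blockDot β i z w‖ ^ 2 ≤ blockSq β i z * blockSq β i w := by
  simp only [blockDot_apply, blockSq, normSq_eq_norm_sq]
  refine (pow_le_pow_left₀ (norm_nonneg _) (norm_sum_le _ _) 2).trans ?_
  simpa only [norm_mul] using Finset.sum_mul_sq_le_sq_mul_sq _ (fun j => ‖z j‖) fun j => ‖w j‖

lemma zero_mem_prodBalls (β : Fin n → Fin l) : (0 : Fin n → ℂ) ∈ prodBalls β :=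
  fun i => by simp [blockSq]

lemma star_mem_prodBalls (hz : z ∈ prodBalls β) : star z ∈ prodBalls β :=
  fun i => (blockSq_star β i z).trans_lt (hz i)

lemma isOpen_prodBalls (β : Fin n → Fin l) : IsOpen (prodBalls β) := by
  simp only [prodBalls, Set.ofPred_forall]
  refine isOpen_iInter_of_finite fun i => isOpen_lt ?_ continuous_const
  unfold blockSq
  fun_prop

lemma eventually_mem_prodBalls {X : Type*} [TopologicalSpace X] {u : X → Fin n → ℂ} {x : X}
    (hu : ContinuousAt u x) (hx : u x ∈ prodBalls β) : ∀ᶠ y in 𝓝 x, u y ∈ prodBalls β :=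
  hu.eventually ((isOpen_prodBalls β).mem_nhds hx)

lemma norm_blockDot_lt_one (i : Fin l) (hz : z ∈ prodBalls β) (hw : w ∈ prodBalls β) :
    ‖blockDot β i z w‖ < 1 := by
  refine (sq_lt_one_iff₀ (norm_nonneg _)).1 ((norm_blockDot_sq_le β i z w).trans_lt ?_)
  exact mul_lt_one_of_nonneg_of_lt_one_left (blockSq_nonneg β i z) (hz i) (hw i).le

lemma one_sub_mem_slitPlane {u : ℂ} (hu : ‖u‖ < 1) : 1 - u ∈ slitPlane := by
  rw [sub_eq_add_neg]
  exact mem_slitPlane_of_norm_lt_one (by rwa [norm_neg])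

lemma one_sub_blockDot_mem_slitPlane (i : Fin l) (hz : z ∈ prodBalls β) (hw : w ∈ prodBalls β) :
    1 - blockDot β i z w ∈ slitPlane :=
  one_sub_mem_slitPlane (norm_blockDot_lt_one i hz hw)

lemma one_sub_blockDot_ne_zero (i : Fin l) (hz : z ∈ prodBalls β) (hw : w ∈ prodBalls β) :
    1 - blockDot β i z w ≠ 0 :=
  slitPlane_ne_zero (one_sub_blockDot_mem_slitPlane i hz hw)

lemma ofReal_one_sub_blockSq (β : Fin n → Fin l) (i : Fin l) (z : Fin n → ℂ) :
    ((1 - blockSq β i z : ℝ) : ℂ) = 1 - blockDot β i z (star z) := by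
  rw [blockDot_self_star, ofReal_sub, ofReal_one]

lemma gnorm_pos (p : Fin l → ℕ) (hz : z ∈ prodBalls β) : 0 < gnorm β p z :=
  Finset.prod_pos fun i _ => pow_pos (sub_pos.2 (hz i)) _

end BlockPairing

section Mobius
variable {n l : ℕ} {β : Fin n → Fin l} {a z w : Fin n → ℂ}

/-- The involutive automorphism of a product of balls that exchanges `0` and `a`. -/
def mobius (β : Fin n → Fin l) (a z : Fin n → ℂ) : Fin n → ℂ := fun j =>
  (a j - (√(1 - blockSq β (β j) a) : ℂ) * z j -
    blockDot β (β j) z (star a) * a j / (1 + (√(1 - blockSq β (β j) a) : ℂ))) /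
  (1 - blockDot β (β j) z (star a))

lemma mobius_zero (β : Fin n → Fin l) (a : Fin n → ℂ) : mobius β a 0 = a := by
  ext j
  simp [mobius]

lemma blockDot_mobius_left (a z w : Fin n → ℂ) (i : Fin l) :
    blockDot β i (mobius β a z) w =
      (blockDot β i a w - (√(1 - blockSq β i a) : ℂ) * blockDot β i z w -
        blockDot β i z (star a) * blockDot β i a w / (1 + (√(1 - blockSq β i a) : ℂ))) /
      (1 - blockDot β i z (star a)) := by
  rw [blockDot_apply, blockDot_apply β i a w, blockDot_apply β i z w, Finset.mul_sum,
    Finset.mul_sum, Finset.sum_div, ← Finset.sum_sub_distrib, ← Finset.sum_sub_distrib,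
    Finset.sum_div]
  refine Finset.sum_congr rfl fun j hj => ?_
  obtain rfl : β j = i := by simpa using hj
  rw [mobius]
  ring

lemma exists_sqrt_one_sub_blockSq (ha : a ∈ prodBalls β) (i : Fin l) :
    ∃ s : ℝ, √(1 - blockSq β i a) = s ∧ (s : ℂ) ≠ 0 ∧ (1 + s : ℂ) ≠ 0 ∧
      blockDot β i a (star a) = 1 - (s : ℂ) ^ 2 := by
  have hpos : 0 < 1 - blockSq β i a := sub_pos.2 (ha i)
  have hs : 0 < √(1 - blockSq β i a) := Real.sqrt_pos.2 hpos
  refine ⟨_, rfl, ofReal_ne_zero.2 hs.ne', ?_, ?_⟩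
  · exact_mod_cast (by positivity : 1 + √(1 - blockSq β i a) ≠ 0)
  · rw [← ofReal_pow, Real.sq_sqrt hpos.le, ofReal_one_sub_blockSq, sub_sub_cancel]

lemma one_sub_blockDot_mobius (ha : a ∈ prodBalls β) (hz : z ∈ prodBalls β)
    (hw : w ∈ prodBalls β) (i : Fin l) :
    1 - blockDot β i (mobius β a z) (star (mobius β a w)) =
      (1 - blockDot β i a (star a)) * (1 - blockDot β i z (star w)) /
        ((1 - blockDot β i z (star a)) * (1 - blockDot β i a (star w))) := by
  obtain ⟨s, hs, -, hs1, hsq⟩ := exists_sqrt_one_sub_blockSq ha i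
  have hza := one_sub_blockDot_ne_zero i hz (star_mem_prodBalls ha)
  have haw := one_sub_blockDot_ne_zero i ha (star_mem_prodBalls hw)
  have hstar : ∀ u v : Fin n → ℂ, blockDot β i u (star v) = conj (blockDot β i v (star u)) :=
    fun u v => by rw [conj_blockDot, star_star, blockDot_comm]
  have hright : ∀ u, blockDot β i u (star (mobius β a w)) =
      (blockDot β i u (star a) - s * blockDot β i u (star w) -
        blockDot β i a (star w) * blockDot β i u (star a) / (1 + s)) /
      (1 - blockDot β i a (star w)) := fun u => by
    rw [hstar u, blockDot_mobius_left, hs, hstar u a, hstar u w, hstar a w]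
    simp only [map_div₀, map_sub, map_mul, map_add, map_one, conj_ofReal]
  rw [blockDot_mobius_left, hright, hright, hs, hsq]
  field_simp
  ring

lemma one_sub_blockDot_mobius_star (ha : a ∈ prodBalls β) (hz : z ∈ prodBalls β) (i : Fin l) :
    1 - blockDot β i (mobius β a z) (star a) =
      (1 - blockDot β i a (star a)) / (1 - blockDot β i z (star a)) := by
  simpa [mobius_zero] using one_sub_blockDot_mobius ha hz (zero_mem_prodBalls β) i

lemma one_sub_blockSq_mobius (ha : a ∈ prodBalls β) (hz : z ∈ prodBalls β) (i : Fin l) :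
    1 - blockSq β i (mobius β a z) =
      (1 - blockSq β i a) * (1 - blockSq β i z) / normSq (1 - blockDot β i z (star a)) := by
  apply ofReal_injective
  rw [ofReal_div, ofReal_mul, ofReal_one_sub_blockSq, ofReal_one_sub_blockSq,
    ofReal_one_sub_blockSq, one_sub_blockDot_mobius ha hz hz, ← mul_conj, map_sub, map_one,
    conj_blockDot, star_star, blockDot_comm β i (star z)]

lemma mobius_mem_prodBalls (ha : a ∈ prodBalls β) (hz : z ∈ prodBalls β) :
    mobius β a z ∈ prodBalls β := by
  intro i
  rw [← sub_pos, one_sub_blockSq_mobius ha hz]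
  exact div_pos (mul_pos (sub_pos.2 (ha i)) (sub_pos.2 (hz i)))
    (normSq_pos.2 (one_sub_blockDot_ne_zero i hz (star_mem_prodBalls ha)))

lemma mobius_mobius (ha : a ∈ prodBalls β) (hz : z ∈ prodBalls β) :
    mobius β a (mobius β a z) = z := by
  ext j
  obtain ⟨s, hs, hs0, hs1, hsq⟩ := exists_sqrt_one_sub_blockSq ha (β j)
  have hza := one_sub_blockDot_ne_zero (β j) hz (star_mem_prodBalls ha)
  have hmob := one_sub_blockDot_mobius_star ha hz (β j)
  rw [mobius, hmob, ← sub_sub_cancel 1 (blockDot β (β j) (mobius β a z) (star a)), hmob, mobius,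
    hs, hsq]
  field_simp
  ring

lemma differentiableAt_mobius (ha : a ∈ prodBalls β) (hz : z ∈ prodBalls β) :
    DifferentiableAt ℂ (mobius β a) z := by
  unfold mobius
  refine differentiableAt_pi.2 fun j => ?_
  have hza := one_sub_blockDot_ne_zero (β j) hz (star_mem_prodBalls ha)
  fun_prop (disch := assumption)

lemma biholo_mobius (ha : a ∈ prodBalls β) : Biholo (mobius β a) (prodBalls β) (prodBalls β) :=
  have hdiff : DifferentiableOn ℂ (mobius β a) (prodBalls β) := fun _ hz =>
    (differentiableAt_mobius ha hz).differentiableWithinAt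
  ⟨hdiff, fun _ => mobius_mem_prodBalls ha, mobius β a, hdiff, fun _ => mobius_mem_prodBalls ha,
    fun _ => mobius_mobius ha, fun _ => mobius_mobius ha⟩

end Mobius

section Potential
variable {n l : ℕ} {β : Fin n → Fin l} {p : Fin l → ℕ} {a z w : Fin n → ℂ}

/-- The polarization of the Kähler potential `-log ρ`. -/
def pot (β : Fin n → Fin l) (p : Fin l → ℕ) (z w : Fin n → ℂ) : ℂ :=
  -∑ i, (p i : ℂ) * log (1 - blockDot β i z w)

/-- The differential at `z` of the potential `pot β p · w`. -/
def dpot (β : Fin n → Fin l) (p : Fin l → ℕ) (z w : Fin n → ℂ) : (Fin n → ℂ) →L[ℂ] ℂ :=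
  ∑ i, (p i / (1 - blockDot β i z w) : ℂ) • blockDot β i w

/-- The polarization of the Hermitian form `∑ᵢ pᵢ ‖z⁽ⁱ⁾‖²`, the second order term of `-log ρ`
at `0`. -/
def metricForm (β : Fin n → Fin l) (p : Fin l → ℕ) : (Fin n → ℂ) →L[ℂ] (Fin n → ℂ) →L[ℂ] ℂ :=
  ∑ i, (p i : ℂ) • blockDot β i

lemma metricForm_apply (β : Fin n → Fin l) (p : Fin l → ℕ) (z w : Fin n → ℂ) :
    metricForm β p z w = ∑ i, (p i : ℂ) * blockDot β i z w := by
  simp [metricForm]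

lemma metricForm_comm (β : Fin n → Fin l) (p : Fin l → ℕ) (z w : Fin n → ℂ) :
    metricForm β p z w = metricForm β p w z := by
  simp only [metricForm_apply, blockDot_comm β _ z]

lemma dpot_zero_left (β : Fin n → Fin l) (p : Fin l → ℕ) (w : Fin n → ℂ) :
    dpot β p 0 w = metricForm β p w := by
  simp [dpot, metricForm]

@[simp] lemma dpot_zero_right (β : Fin n → Fin l) (p : Fin l → ℕ) (z : Fin n → ℂ) :
    dpot β p z 0 = 0 := by
  ext v
  simp [dpot]

@[simp] lemma pot_zero_left (β : Fin n → Fin l) (p : Fin l → ℕ) (w : Fin n → ℂ) :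
    pot β p 0 w = 0 := by
  simp [pot]

@[simp] lemma pot_zero_right (β : Fin n → Fin l) (p : Fin l → ℕ) (z : Fin n → ℂ) :
    pot β p z 0 = 0 := by
  simp [pot]

lemma pot_comm (β : Fin n → Fin l) (p : Fin l → ℕ) (z w : Fin n → ℂ) :
    pot β p z w = pot β p w z := by
  simp only [pot, blockDot_comm β _ z w]

lemma conj_pot (p : Fin l → ℕ) (hz : z ∈ prodBalls β) (hw : w ∈ prodBalls β) :
    conj (pot β p z w) = pot β p (star z) (star w) := by
  simp only [pot, map_neg, map_sum, map_mul, map_natCast, neg_inj]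
  refine Finset.sum_congr rfl fun i _ => ?_
  rw [← log_conj _ (slitPlane_arg_ne_pi (one_sub_blockDot_mem_slitPlane i hz hw)), map_sub,
    map_one, conj_blockDot]

lemma exp_neg_pot (p : Fin l → ℕ) (hz : z ∈ prodBalls β) (hw : w ∈ prodBalls β) :
    exp (-pot β p z w) = ∏ i, (1 - blockDot β i z w) ^ p i := by
  rw [pot, neg_neg, exp_sum]
  refine Finset.prod_congr rfl fun i _ => ?_
  rw [exp_nat_mul, exp_log (one_sub_blockDot_ne_zero i hz hw)]

lemma pot_self_star (p : Fin l → ℕ) (hz : z ∈ prodBalls β) :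
    pot β p z (star z) = -(Real.log (gnorm β p z) : ℂ) := by
  rw [pot, gnorm, Real.log_prod fun i _ => (pow_pos (sub_pos.2 (hz i)) _).ne', ofReal_sum]
  congr 1
  refine Finset.sum_congr rfl fun i _ => ?_
  rw [Real.log_pow, ofReal_mul, ofReal_log (sub_pos.2 (hz i)).le, ofReal_one_sub_blockSq,
    ofReal_natCast]

lemma hasFDerivAt_pot (p : Fin l → ℕ) {P : (Fin n → ℂ) × (Fin n → ℂ)} (h₁ : P.1 ∈ prodBalls β)
    (h₂ : P.2 ∈ prodBalls β) :
    HasFDerivAt (fun P : (Fin n → ℂ) × (Fin n → ℂ) => pot β p P.1 P.2)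
      (dpot β p P.1 P.2 ∘L .fst ℂ _ _ + dpot β p P.2 P.1 ∘L .snd ℂ _ _) P := by
  have hlog : ∀ i, HasFDerivAt (fun P : (Fin n → ℂ) × (Fin n → ℂ) => log (1 - blockDot β i P.1 P.2))
      ((1 - blockDot β i P.1 P.2)⁻¹ •
        -(blockDot β i P.1 ∘L .snd ℂ _ _ + blockDot β i P.2 ∘L .fst ℂ _ _)) P := fun i => by
    have hdot := (blockDot β i).hasFDerivAt_of_bilinear (hasFDerivAt_fst (𝕜 := ℂ) (p := P))
      hasFDerivAt_snd
    refine ((hdot.const_sub 1).clog (one_sub_blockDot_mem_slitPlane i h₁ h₂)).congr_fderiv ?_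
    ext v <;> simp [blockDot_comm β i _ P.2]
  refine (HasFDerivAt.fun_sum fun i _ => (hlog i).const_mul (p i : ℂ)).neg.congr_fderiv ?_
  ext v <;> simp [dpot, blockDot_comm β _ P.2 P.1, div_eq_mul_inv, mul_assoc]

lemma hasFDerivAt_pot_left (p : Fin l → ℕ) (hz : z ∈ prodBalls β) (hw : w ∈ prodBalls β) :
    HasFDerivAt (fun z => pot β p z w) (dpot β p z w) z := by
  refine (HasFDerivAt.comp (f := fun z => (z, w)) z (hasFDerivAt_pot p (P := (z, w)) hz hw)
    (hasFDerivAt_prodMk_left z w)).congr_fderiv ?_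
  ext v
  simp

lemma differentiableAt_pot (p : Fin l → ℕ) {X : Type*} [NormedAddCommGroup X] [NormedSpace ℂ X]
    {u v : X → Fin n → ℂ} {x : X} (hu : DifferentiableAt ℂ u x) (hv : DifferentiableAt ℂ v x)
    (hux : u x ∈ prodBalls β) (hvx : v x ∈ prodBalls β) :
    DifferentiableAt ℂ (fun x => pot β p (u x) (v x)) x :=
  (hasFDerivAt_pot p (P := (u x, v x)) hux hvx).differentiableAt.comp (f := fun x => (u x, v x)) x
    (hu.prodMk hv)

lemma differentiableAt_dpot (p : Fin l → ℕ) {X : Type*} [NormedAddCommGroup X] [NormedSpace ℂ X]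
    {u v : X → Fin n → ℂ} {x : X} (hu : DifferentiableAt ℂ u x) (hv : DifferentiableAt ℂ v x)
    (hux : u x ∈ prodBalls β) (hvx : v x ∈ prodBalls β) :
    DifferentiableAt ℂ (fun x => dpot β p (u x) (v x)) x := by
  unfold dpot
  have hne := fun i => one_sub_blockDot_ne_zero i hux hvx
  fun_prop (disch := exact hne _)

lemma pot_mobius_star (p : Fin l → ℕ) (ha : a ∈ prodBalls β) (hz : z ∈ prodBalls β) :
    pot β p (mobius β a z) (star a) = pot β p a (star a) - pot β p z (star a) := by
  simp only [pot, one_sub_blockDot_mobius_star ha hz, neg_sub_neg]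
  rw [← neg_sub, ← Finset.sum_sub_distrib]
  congr 1
  refine Finset.sum_congr rfl fun i _ => ?_
  have hslit := one_sub_blockDot_mem_slitPlane i hz (star_mem_prodBalls ha)
  have hpos : 0 < 1 - blockSq β i a := sub_pos.2 (ha i)
  rw [← ofReal_one_sub_blockSq, div_eq_mul_inv,
    log_ofReal_mul hpos (inv_ne_zero (slitPlane_ne_zero hslit)),
    log_inv _ (slitPlane_arg_ne_pi hslit), ofReal_log hpos.le]
  ring

lemma gnorm_mobius (p : Fin l → ℕ) (ha : a ∈ prodBalls β) (hz : z ∈ prodBalls β) :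
    gnorm β p (mobius β a z) = gnorm β p a * gnorm β p z * normSq (exp (pot β p z (star a))) := by
  have hexp : exp (pot β p z (star a)) = (∏ i, (1 - blockDot β i z (star a)) ^ p i)⁻¹ := by
    rw [← exp_neg_pot p hz (star_mem_prodBalls ha), exp_neg, inv_inv]
  simp only [hexp, gnorm, one_sub_blockSq_mobius ha hz, div_eq_mul_inv, mul_pow, inv_pow,
    Finset.prod_inv_distrib, Finset.prod_mul_distrib, map_inv₀, map_prod, map_pow]

lemma normSq_exp (u : ℂ) : normSq (exp u) = Real.exp (2 * u.re) := by
  rw [normSq_eq_norm_sq, norm_exp, ← Real.exp_nat_mul, Nat.cast_ofNat]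

lemma pot_mobius_self (p : Fin l → ℕ) (ha : a ∈ prodBalls β) (hz : z ∈ prodBalls β) :
    pot β p (mobius β a z) (star (mobius β a z)) = pot β p a (star a) + pot β p z (star z)
      - (pot β p z (star a) + conj (pot β p z (star a))) := by
  have hρa := (gnorm_pos p ha).ne'
  have hρz := (gnorm_pos p hz).ne'
  rw [pot_self_star p (mobius_mem_prodBalls ha hz), pot_self_star p ha, pot_self_star p hz,
    gnorm_mobius p ha hz, normSq_exp, Real.log_mul (mul_ne_zero hρa hρz) (Real.exp_ne_zero _),
    Real.log_mul hρa hρz, Real.log_exp, add_conj]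
  push_cast
  ring

end Potential

section Polarization
variable {n l : ℕ} {β : Fin n → Fin l} {p : Fin l → ℕ}

/-- The polarization of the circle bundle in the logarithmic fibre coordinate `log ξ`: the pairs
`((z, s), (w, t))` with `s + t - log ρ(z, w) = 0`. -/
def OnSegre (β : Fin n → Fin l) (p : Fin l → ℕ)
    (P : ((Fin n → ℂ) × ℂ) × ((Fin n → ℂ) × ℂ)) : Prop :=
  P.1.2 + P.2.2 + pot β p P.1.1 P.2.1 = 0

/-- Membership in the circle bundle in the logarithmic fibre coordinate, see
`isRealPt_iff_fibreExp_mem_circBundle`. -/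
def IsRealPt (β : Fin n → Fin l) (p : Fin l → ℕ) (x : (Fin n → ℂ) × ℂ) : Prop :=
  OnSegre β p (x, star x)

lemma isRealPt_iff {x : (Fin n → ℂ) × ℂ} :
    IsRealPt β p x ↔ x.2 + conj x.2 + pot β p x.1 (star x.1) = 0 :=
  Iff.rfl

/-- The map from the logarithmic fibre coordinate to the fibre coordinate. -/
def fibreExp (x : (Fin n → ℂ) × ℂ) : (Fin n → ℂ) × ℂ := (x.1, exp x.2)

lemma isRealPt_iff_fibreExp_mem_circBundle {x : (Fin n → ℂ) × ℂ} (hx : x.1 ∈ prodBalls β) :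
    IsRealPt β p x ↔ fibreExp x ∈ circBundle β p := by
  rw [isRealPt_iff, pot_self_star p hx, add_conj, ← sub_eq_add_neg, sub_eq_zero, ofReal_inj]
  simp only [fibreExp, circBundle, Set.mem_ofPred_eq, hx, true_and, normSq_exp]
  exact ⟨fun h => h ▸ Real.exp_log (gnorm_pos p hx), fun h => h ▸ (Real.log_exp _).symm⟩

/-- The parametrization of the complexified circle bundle near `0` by `(z, w, (s - t) / 2)`. -/
def segreParam (β : Fin n → Fin l) (p : Fin l → ℕ) (e : (Fin n → ℂ) × (Fin n → ℂ) × ℂ) :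
    ((Fin n → ℂ) × ℂ) × ((Fin n → ℂ) × ℂ) :=
  ((e.1, e.2.2 - pot β p e.1 e.2.1 / 2), (e.2.1, -e.2.2 - pot β p e.1 e.2.1 / 2))

/-- The conjugation of `(z, w, s)`-space whose fixed points parametrize the circle bundle under
`segreParam`. -/
def segreConj (n : ℕ) :
    ((Fin n → ℂ) × (Fin n → ℂ) × ℂ) →L⋆[ℂ] ((Fin n → ℂ) × (Fin n → ℂ) × ℂ) where
  toFun e := (star e.2.1, star e.1, -star e.2.2)
  map_add' _ _ := by simp [add_comm]
  map_smul' _ _ := by simp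

lemma segreConj_segreConj (e : (Fin n → ℂ) × (Fin n → ℂ) × ℂ) :
    segreConj n (segreConj n e) = e := by
  simp [segreConj]

lemma onSegre_segreParam (e : (Fin n → ℂ) × (Fin n → ℂ) × ℂ) :
    OnSegre β p (segreParam β p e) := by
  simp only [OnSegre, segreParam]
  ring

lemma segreParam_of_onSegre {P : ((Fin n → ℂ) × ℂ) × ((Fin n → ℂ) × ℂ)} (hP : OnSegre β p P) :
    segreParam β p (P.1.1, P.2.1, (P.1.2 - P.2.2) / 2) = P := by
  have hpot : pot β p P.1.1 P.2.1 = -(P.1.2 + P.2.2) := by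
    unfold OnSegre at hP
    linear_combination hP
  refine Prod.ext (Prod.ext rfl ?_) (Prod.ext rfl ?_) <;>
    · simp only [segreParam, hpot]
      ring

lemma segreParam_snd_of_fixed {e : (Fin n → ℂ) × (Fin n → ℂ) × ℂ} (he : segreConj n e = e)
    (h : e.1 ∈ prodBalls β) : (segreParam β p e).2 = star (segreParam β p e).1 := by
  obtain ⟨z, w, s⟩ := e
  simp only [segreConj, ContinuousLinearMap.coe_mk', LinearMap.coe_mk, AddHom.coe_mk,
    Prod.mk.injEq] at he
  obtain ⟨-, rfl, hs⟩ := he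
  have hpot : conj (pot β p z (star z)) = pot β p z (star z) := by
    rw [conj_pot p h (star_mem_prodBalls h), star_star, pot_comm]
  refine Prod.ext rfl ?_
  have hs' : -s = conj s := by rw [starRingEnd_apply, ← hs, star_neg, star_star, hs]
  change -s - pot β p z (star z) / 2 = conj (s - pot β p z (star z) / 2)
  rw [map_sub, map_div₀, hpot, map_ofNat, hs']

lemma eventually_differentiableAt_segreParam (β : Fin n → Fin l) (p : Fin l → ℕ) :
    ∀ᶠ e in 𝓝 0, DifferentiableAt ℂ (segreParam β p) e := by
  filter_upwards [eventually_mem_prodBalls (β := β) continuous_fst.continuousAt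
    (zero_mem_prodBalls β), eventually_mem_prodBalls (β := β)
    (u := fun e : (Fin n → ℂ) × (Fin n → ℂ) × ℂ => e.2.1) (by fun_prop) (zero_mem_prodBalls β)]
    with e hz hw
  have hpot : DifferentiableAt ℂ (fun e : (Fin n → ℂ) × (Fin n → ℂ) × ℂ => pot β p e.1 e.2.1) e :=
    differentiableAt_pot p (by fun_prop) (by fun_prop) hz hw
  unfold segreParam
  fun_prop

lemma eventually_onSegre_imp {H : Type*} [NormedAddCommGroup H] [NormedSpace ℂ H] [CompleteSpace H]
    {Φ : ((Fin n → ℂ) × ℂ) × ((Fin n → ℂ) × ℂ) → H} (hΦ : ∀ᶠ P in 𝓝 0, DifferentiableAt ℂ Φ P)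
    (h0 : ∀ᶠ x in 𝓝 0, IsRealPt β p x → Φ (x, star x) = 0) :
    ∀ᶠ P in 𝓝 0, OnSegre β p P → Φ P = 0 := by
  have hdiff := eventually_differentiableAt_segreParam β p
  have hparam0 : segreParam β p 0 = 0 := by simp [segreParam]
  have hparam : Tendsto (segreParam β p) (𝓝 0) (𝓝 0) := by
    simpa only [hparam0] using hdiff.self_of_nhds.continuousAt.tendsto
  have hzero : ∀ᶠ e in 𝓝 0, Φ (segreParam β p e) = 0 := by
    refine eventually_eq_zero_of_fixed (segreConj n) segreConj_segreConj ?_ ?_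
    · filter_upwards [hparam.eventually hΦ, hdiff] with e h₁ h₂ using h₁.comp e h₂
    · filter_upwards [((continuous_fst.tendsto' 0 0 rfl).comp hparam).eventually h0,
        eventually_mem_prodBalls (β := β) continuous_fst.continuousAt (zero_mem_prodBalls β)]
        with e hreal hz he
      have hpair : ((segreParam β p e).1, star (segreParam β p e).1) = segreParam β p e :=
        Prod.ext rfl (segreParam_snd_of_fixed he hz).symm
      rw [← hpair]
      exact hreal (by rw [IsRealPt, Function.comp_apply, hpair]; exact onSegre_segreParam e)
  have hcoord : Tendsto (fun P : ((Fin n → ℂ) × ℂ) × ((Fin n → ℂ) × ℂ) =>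
      (P.1.1, P.2.1, (P.1.2 - P.2.2) / 2)) (𝓝 0) (𝓝 0) :=
    Continuous.tendsto' (by fun_prop) _ _ (by simp)
  filter_upwards [hcoord.eventually hzero] with P hP hseg
  rwa [segreParam_of_onSegre hseg] at hP

lemma eventually_eq_zero_of_isRealPt {H : Type*} [NormedAddCommGroup H] [NormedSpace ℂ H]
    [CompleteSpace H] {k : (Fin n → ℂ) × ℂ → H} (hk : ∀ᶠ x in 𝓝 0, DifferentiableAt ℂ k x)
    (h0 : ∀ᶠ x in 𝓝 0, IsRealPt β p x → k x = 0) : ∀ᶠ x in 𝓝 0, k x = 0 := by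
  have hfst := continuous_fst.tendsto' (0 : ((Fin n → ℂ) × ℂ) × ((Fin n → ℂ) × ℂ)) 0 rfl
  have hseg : ∀ᶠ P in 𝓝 0, OnSegre β p P → k P.1 = 0 :=
    eventually_onSegre_imp ((hfst.eventually hk).mono fun P hP => hP.comp P differentiableAt_fst) h0
  have hlift : Tendsto (fun x : (Fin n → ℂ) × ℂ => (x, ((0 : Fin n → ℂ), -x.2))) (𝓝 0) (𝓝 0) :=
    Continuous.tendsto' (by fun_prop) _ _ (by simp)
  filter_upwards [hlift.eventually hseg] with x hx
  exact hx (by simp [OnSegre])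

end Polarization

section LogShift
variable {n l : ℕ} {β : Fin n → Fin l} {p : Fin l → ℕ} {a : Fin n → ℂ} {c c' : ℂ}
  {x : (Fin n → ℂ) × ℂ}

/-- The lift of the automorphism `mobius β a` to the line bundle, in the logarithmic fibre
coordinate. -/
def logShift (β : Fin n → Fin l) (p : Fin l → ℕ) (a : Fin n → ℂ) (c : ℂ) (x : (Fin n → ℂ) × ℂ) :
    (Fin n → ℂ) × ℂ :=
  (mobius β a x.1, x.2 + c + pot β p x.1 (star a))

lemma logShift_zero (β : Fin n → Fin l) (p : Fin l → ℕ) (a : Fin n → ℂ) (c : ℂ) :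
    logShift β p a c 0 = (a, c) := by
  simp [logShift, mobius_zero]

lemma logShift_logShift (ha : a ∈ prodBalls β) (hc : c + c' + pot β p a (star a) = 0)
    (hx : x.1 ∈ prodBalls β) : logShift β p a c (logShift β p a c' x) = x := by
  refine Prod.ext (mobius_mobius ha hx) ?_
  simp only [logShift, pot_mobius_star p ha hx]
  linear_combination hc

lemma isRealPt_logShift (ha : a ∈ prodBalls β) (hc : IsRealPt β p (a, c)) (hxb : x.1 ∈ prodBalls β)
    (hx : IsRealPt β p x) : IsRealPt β p (logShift β p a c x) := by
  simp only [isRealPt_iff, logShift, map_add, pot_mobius_self p ha hxb] at *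
  linear_combination hc + hx

lemma isRealPt_star_snd (hc : IsRealPt β p (a, c)) :
    IsRealPt β p (a, conj c) := by
  rw [isRealPt_iff] at hc ⊢
  simpa [add_comm] using hc

lemma differentiableAt_logShift (ha : a ∈ prodBalls β) (c : ℂ) (hx : x.1 ∈ prodBalls β) :
    DifferentiableAt ℂ (logShift β p a c) x := by
  have hmob : DifferentiableAt ℂ (fun x : (Fin n → ℂ) × ℂ => mobius β a x.1) x :=
    (differentiableAt_mobius ha hx).comp x differentiableAt_fst
  have hpot : DifferentiableAt ℂ (fun x : (Fin n → ℂ) × ℂ => pot β p x.1 (star a)) x :=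
    differentiableAt_pot p differentiableAt_fst (differentiableAt_const _) hx
      (star_mem_prodBalls ha)
  unfold logShift
  fun_prop

lemma hasFDerivAt_logShift (ha : a ∈ prodBalls β) (c : ℂ) (hx : x.1 ∈ prodBalls β) :
    HasFDerivAt (logShift β p a c)
      ((fderiv ℂ (mobius β a) x.1 ∘L .fst ℂ _ _).prod
        (.snd ℂ _ _ + dpot β p x.1 (star a) ∘L .fst ℂ _ _)) x := by
  have hmob : HasFDerivAt (fun x : (Fin n → ℂ) × ℂ => mobius β a x.1) _ x :=
    (differentiableAt_mobius ha hx).hasFDerivAt.comp x hasFDerivAt_fst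
  have hpot : HasFDerivAt (fun x : (Fin n → ℂ) × ℂ => pot β p x.1 (star a)) _ x :=
    (hasFDerivAt_pot_left p hx (star_mem_prodBalls ha)).comp x hasFDerivAt_fst
  exact hmob.prodMk ((hasFDerivAt_snd.add_const c).add hpot)

end LogShift

section MetricSq
variable {n l : ℕ} {β : Fin n → Fin l} {p : Fin l → ℕ}

/-- The Hermitian norm `∑ᵢ pᵢ ‖z⁽ⁱ⁾‖²`, the metric of the potential `-log ρ` at `0`. -/
def metricSq (β : Fin n → Fin l) (p : Fin l → ℕ) (z : Fin n → ℂ) : ℝ :=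
  ∑ i, p i * blockSq β i z

/-- The polarization of `∑ᵢ pᵢ ‖z⁽ⁱ⁾‖⁴`, twice the fourth order term of `-log ρ` at `0`. -/
def quarticForm (β : Fin n → Fin l) (p : Fin l → ℕ) (z w : Fin n → ℂ) : ℂ :=
  ∑ i, (p i : ℂ) * blockDot β i z w ^ 2

lemma metricForm_self_star (β : Fin n → Fin l) (p : Fin l → ℕ) (z : Fin n → ℂ) :
    metricForm β p z (star z) = metricSq β p z := by
  simp [metricForm_apply, blockDot_self_star, metricSq]

lemma metricSq_nonneg (β : Fin n → Fin l) (p : Fin l → ℕ) (z : Fin n → ℂ) : 0 ≤ metricSq β p z :=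
  Finset.sum_nonneg fun i _ => mul_nonneg (Nat.cast_nonneg _) (blockSq_nonneg β i z)

lemma eq_zero_of_metricSq_eq_zero (hp : ∀ i, 0 < p i) {z : Fin n → ℂ} (hz : metricSq β p z = 0) :
    z = 0 := by
  ext j
  have hblock : (p (β j) : ℝ) * blockSq β (β j) z = 0 :=
    (Finset.sum_eq_zero_iff_of_nonneg fun i _ =>
      mul_nonneg (Nat.cast_nonneg _) (blockSq_nonneg β i z)).1 hz (β j) (Finset.mem_univ _)
  have hsum : blockSq β (β j) z = 0 :=
    (mul_eq_zero.1 hblock).resolve_left (Nat.cast_ne_zero.2 (hp _).ne')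
  exact normSq_eq_zero.1
    ((Finset.sum_eq_zero_iff_of_nonneg fun _ _ => normSq_nonneg _).1 hsum j (by simp))

lemma eq_of_forall_metricForm_eq (hp : ∀ i, 0 < p i) {z z' : Fin n → ℂ}
    (h : ∀ w, metricForm β p z w = metricForm β p z' w) : z = z' := by
  refine sub_eq_zero.1 (eq_zero_of_metricSq_eq_zero (β := β) hp (ofReal_injective ?_))
  rw [← metricForm_self_star, map_sub, sub_apply, h, sub_self, ofReal_zero]

lemma surjective_of_metricSq_map {l' : ℕ} {β' : Fin n → Fin l'} {p' : Fin l' → ℕ}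
    {A : (Fin n → ℂ) →L[ℂ] (Fin n → ℂ)} {c : ℂ} (hp : ∀ i, 0 < p i) (hc : c ≠ 0)
    (hA : ∀ z, (metricSq β' p' (A z) : ℂ) = c * metricSq β p z) : Function.Surjective A := by
  refine LinearMap.injective_iff_surjective.1 ((injective_iff_map_eq_zero A).2 fun z hz => ?_)
  have hsq : (metricSq β p z : ℂ) = 0 := by
    refine (mul_eq_zero.1 ?_).resolve_left hc
    rw [← hA, hz]
    simp [metricSq, blockSq]
  exact eq_zero_of_metricSq_eq_zero hp (ofReal_eq_zero.1 hsq)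

lemma norm_quarticForm_le (β : Fin n → Fin l) (p : Fin l → ℕ) (z w : Fin n → ℂ) :
    ‖quarticForm β p z (star w)‖ ≤ metricSq β p z * metricSq β p w := by
  have hnonneg : ∀ (v : Fin n → ℂ) i, 0 ≤ p i * blockSq β i v := fun v i =>
    mul_nonneg (Nat.cast_nonneg _) (blockSq_nonneg β i v)
  have hterm : ∀ i, ‖(p i : ℂ) * blockDot β i z (star w) ^ 2‖ ≤
      (p i * blockSq β i z) * (p i * blockSq β i w) := fun i => by
    have hp : (p i : ℝ) ≤ p i * p i := mod_cast Nat.le_mul_self (p i)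
    have hCS := norm_blockDot_sq_le β i z (star w)
    rw [blockSq_star] at hCS
    rw [norm_mul, norm_pow, norm_natCast, mul_mul_mul_comm]
    exact mul_le_mul hp hCS (by positivity) (by positivity)
  calc ‖quarticForm β p z (star w)‖
      ≤ ∑ i, (p i * blockSq β i z) * (p i * blockSq β i w) :=
        norm_sum_le_of_le _ fun i _ => hterm i
    _ ≤ ∑ i, (p i * blockSq β i z) * metricSq β p w :=
        Finset.sum_le_sum fun i _ => mul_le_mul_of_nonneg_left
          (Finset.single_le_sum (fun j _ => hnonneg w j) (Finset.mem_univ i)) (hnonneg z i)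
    _ = metricSq β p z * metricSq β p w := (Finset.sum_mul ..).symm

lemma blockDot_single (β : Fin n → Fin l) (i : Fin l) (j : Fin n) (v : Fin n → ℂ) :
    blockDot β i (Pi.single j 1) v = if β j = i then v j else 0 := by
  simp [blockDot_apply, Pi.single_apply]

lemma exists_quarticForm_ne_zero (hl : 2 ≤ l) (hβ : Function.Surjective β) (hp : ∀ i, 0 < p i) :
    ∃ z w, metricForm β p z (star w) = 0 ∧ quarticForm β p z (star w) ≠ 0 := by
  have : Nontrivial (Fin l) := Fin.nontrivial_iff_two_le.2 hl
  obtain ⟨i, i', hii'⟩ := exists_pair_ne (Fin l)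
  obtain ⟨j, rfl⟩ := hβ i
  obtain ⟨j', rfl⟩ := hβ i'
  have hjj' : j ≠ j' := fun h => hii' (congrArg β h)
  refine ⟨Pi.single j 1 + Pi.single j' 1,
    Pi.single j (p (β j') : ℂ) - Pi.single j' (p (β j) : ℂ), ?_, ?_⟩
  all_goals
    set w : Fin n → ℂ := Pi.single j (p (β j') : ℂ) - Pi.single j' (p (β j) : ℂ)
    have hw : star w j = p (β j') := by simp [w, hjj']
    have hw' : star w j' = -p (β j) := by simp [w, hjj'.symm]
  · simp only [metricForm_apply, map_add, add_apply, blockDot_single, hw, hw',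
      mul_ite, mul_zero, Finset.sum_ite_eq, Finset.mem_univ, if_true]
    ring
  · have hterm : ∀ i, (p i : ℂ) * blockDot β i (Pi.single j 1 + Pi.single j' 1) (star w) ^ 2 =
        (if β j = i then (p i : ℂ) * p (β j') ^ 2 else 0) +
          if β j' = i then (p i : ℂ) * p (β j) ^ 2 else 0 := fun i => by
      rw [map_add, add_apply, blockDot_single, blockDot_single, hw, hw']
      rcases eq_or_ne (β j) i with rfl | hi
      · simp [hii'.symm]
      · simp [hi]
    simp only [quarticForm, hterm, Finset.sum_add_distrib, Finset.sum_ite_eq, Finset.mem_univ,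
      if_true]
    have := hp (β j)
    have := hp (β j')
    exact_mod_cast (by positivity : p (β j) * p (β j') ^ 2 + p (β j') * p (β j) ^ 2 ≠ 0)

end MetricSq

section SymbolMap
variable {n l l' : ℕ} {β : Fin n → Fin l} {p : Fin l → ℕ} {β₁ : Fin n → Fin l} {p₁ : Fin l → ℕ}
  {β₂ : Fin n → Fin l'} {p₂ : Fin l' → ℕ} {A A' : (Fin n → ℂ) →L[ℂ] (Fin n → ℂ)} {r r' : ℝ}

/-- A linear map that rescales the metric form by `r > 0`, and the quartic form on orthogonal pairs
by the same factor: the symbol at `0` of a local isomorphism of circle bundles that fixes `0`. -/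
structure SymbolMap (β₁ : Fin n → Fin l) (p₁ : Fin l → ℕ) (β₂ : Fin n → Fin l') (p₂ : Fin l' → ℕ)
    (A : (Fin n → ℂ) →L[ℂ] (Fin n → ℂ)) (r : ℝ) : Prop where
  scale_pos : 0 < r
  map_metricForm : ∀ z w, metricForm β₂ p₂ (A z) (star (A w)) = r * metricForm β₁ p₁ z (star w)
  map_quarticForm : ∀ z w, metricForm β₁ p₁ z (star w) = 0 →
    quarticForm β₂ p₂ (A z) (star (A w)) = r * quarticForm β₁ p₁ z (star w)

/-- The supremum of the quartic form over orthonormal pairs, an invariant of symbol maps up to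
scale. -/
def orthCurvature (β : Fin n → Fin l) (p : Fin l → ℕ) : ℝ :=
  ⨆ x : {x : (Fin n → ℂ) × (Fin n → ℂ) // metricForm β p x.1 (star x.2) = 0},
    ‖quarticForm β p x.1.1 (star x.1.2)‖ / (metricSq β p x.1.1 * metricSq β p x.1.2)

lemma orthCurvature_pos (hl : 2 ≤ l) (hβ : Function.Surjective β) (hp : ∀ i, 0 < p i) :
    0 < orthCurvature β p := by
  obtain ⟨z, w, hzw, hquartic⟩ := exists_quarticForm_ne_zero hl hβ hp
  have hbdd : BddAbove (Set.range fun x : {x : (Fin n → ℂ) × (Fin n → ℂ) //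
      metricForm β p x.1 (star x.2) = 0} =>
      ‖quarticForm β p x.1.1 (star x.1.2)‖ / (metricSq β p x.1.1 * metricSq β p x.1.2)) := by
    refine ⟨1, Set.forall_mem_range.2 fun x => div_le_one_of_le₀ (norm_quarticForm_le β p _ _) ?_⟩
    exact mul_nonneg (metricSq_nonneg β p _) (metricSq_nonneg β p _)
  refine lt_of_lt_of_le ?_ (le_ciSup hbdd ⟨(z, w), hzw⟩)
  have hquartic_pos := norm_pos_iff.2 hquartic
  exact div_pos hquartic_pos (hquartic_pos.trans_le (norm_quarticForm_le β p z w))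

namespace SymbolMap

lemma metricSq_map (hA : SymbolMap β₁ p₁ β₂ p₂ A r) (z : Fin n → ℂ) :
    metricSq β₂ p₂ (A z) = r * metricSq β₁ p₁ z := by
  apply ofReal_injective
  rw [← metricForm_self_star, hA.map_metricForm, metricForm_self_star, ofReal_mul]

lemma surjective (hp : ∀ i, 0 < p₁ i) (hA : SymbolMap β₁ p₁ β₂ p₂ A r) : Function.Surjective A :=
  surjective_of_metricSq_map hp (ofReal_ne_zero.2 hA.scale_pos.ne') fun z => by
    rw [hA.metricSq_map, ofReal_mul]

lemma mul_orthCurvature (hp : ∀ i, 0 < p₁ i) (hA : SymbolMap β₁ p₁ β₂ p₂ A r) :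
    r⁻¹ * orthCurvature β₁ p₁ = orthCurvature β₂ p₂ := by
  have hr := hA.scale_pos
  rw [orthCurvature, Real.mul_iSup_of_nonneg (inv_nonneg.2 hr.le)]
  refine Function.Surjective.iSup_congr (fun x => ⟨(A x.1.1, A x.1.2), ?_⟩) ?_ fun x => ?_
  · rw [hA.map_metricForm, x.2, mul_zero]
  · rintro ⟨⟨u, v⟩, huv⟩
    obtain ⟨z, rfl⟩ := hA.surjective hp u
    obtain ⟨w, rfl⟩ := hA.surjective hp v
    rw [hA.map_metricForm, mul_eq_zero] at huv
    exact ⟨⟨(z, w), huv.resolve_left (ofReal_ne_zero.2 hr.ne')⟩, rfl⟩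
  · rw [hA.map_quarticForm _ _ x.2, hA.metricSq_map, hA.metricSq_map, norm_mul,
      Complex.norm_of_nonneg hr.le]
    field_simp

lemma scale_unique (hβ₁ : Function.Surjective β₁) (hβ₂ : Function.Surjective β₂)
    (hp₁ : ∀ i, 0 < p₁ i) (hp₂ : ∀ j, 0 < p₂ j) (hrank : 2 ≤ l ∨ 2 ≤ l')
    (hA : SymbolMap β₁ p₁ β₂ p₂ A r) (hA' : SymbolMap β₁ p₁ β₂ p₂ A' r') : r = r' := by
  have hscale := (hA.mul_orthCurvature hp₁).trans (hA'.mul_orthCurvature hp₁).symm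
  have hne : orthCurvature β₁ p₁ ≠ 0 := by
    rcases hrank with hl | hl
    · exact (orthCurvature_pos hl hβ₁ hp₁).ne'
    · exact right_ne_zero_of_mul
        ((hA.mul_orthCurvature hp₁).trans_ne (orthCurvature_pos hl hβ₂ hp₂).ne')
  exact inv_injective (mul_right_cancel₀ hne hscale)

end SymbolMap

end SymbolMap

section Expansion
open Asymptotics
variable {n l : ℕ}

lemma isLittleO_bilinear {X E F G : Type*} [NormedAddCommGroup E] [NormedSpace ℂ E]
    [NormedAddCommGroup F] [NormedSpace ℂ F] [NormedAddCommGroup G] [NormedSpace ℂ G]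
    (B : E →L[ℂ] F →L[ℂ] G) {𝓁 : Filter X} {u : X → E} {v : X → F} {a b : X → ℂ}
    (hu : u =o[𝓁] a) (hv : v =O[𝓁] b) : (fun x => B (u x) (v x)) =o[𝓁] fun x => a x * b x := by
  refine (B.isBoundedBilinearMap.isBigO_comp (g := u) (h := v)).trans_isLittleO ?_
  exact (hu.norm_left.mul_isBigO hv.norm_left)

lemma neg_log_one_sub_isLittleO :
    (fun u : ℂ => -log (1 - u) - u - u ^ 2 / 2) =o[𝓝 0] fun u => u ^ 2 := by
  have hneg : Tendsto (fun u : ℂ => -u) (𝓝 0) (𝓝 0) := continuous_neg.tendsto' 0 0 neg_zero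
  have hlog := ((log_sub_logTaylor_isBigO 2).comp_tendsto hneg).neg_left
  refine (hlog.congr (fun u => ?_) fun u => ?_).trans_isLittleO
    ((isLittleO_pow_pow (show 2 < 3 by norm_num)).neg_left)
  · simp only [Function.comp_apply, ← sub_eq_add_neg, logTaylor_succ, logTaylor_zero]
    norm_num
    ring
  · simp [Odd.neg_pow (n := 3) (by decide)]

variable {u v : ℂ → Fin n → ℂ} {u' v' : Fin n → ℂ}

lemma blockDot_sub_isLittleO (β : Fin n → Fin l) (i : Fin l) (hu : HasDerivAt u u' 0)
    (hv : HasDerivAt v v' 0) (hu0 : u 0 = 0) (hv0 : v 0 = 0) :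
    (fun s => blockDot β i (u s) (v s) - s ^ 2 * blockDot β i u' v') =o[𝓝 0] fun s => s ^ 2 := by
  have hu_sub : (fun s => u s - s • u') =o[𝓝 0] fun s : ℂ => s := by
    simpa [hu0] using hasDerivAt_iff_isLittleO.1 hu
  have hv_sub : (fun s => v s - s • v') =o[𝓝 0] fun s : ℂ => s := by
    simpa [hv0] using hasDerivAt_iff_isLittleO.1 hv
  have hvO : v =O[𝓝 0] fun s : ℂ => s := by
    simpa [hv0] using hv.differentiableAt.isBigO_sub
  have h₁ : (fun s => blockDot β i (u s - s • u') (v s)) =o[𝓝 0] fun s => s * s :=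
    isLittleO_bilinear _ hu_sub hvO
  have h₂ : (fun s => s * blockDot β i u' (v s - s • v')) =o[𝓝 0] fun s : ℂ => s * s :=
    (isBigO_refl _ _).mul_isLittleO (((blockDot β i u').isBigO_comp _ _).trans_isLittleO hv_sub)
  refine (h₁.add h₂).congr (fun s => ?_) fun s => (sq s).symm
  simp only [map_sub, map_smul, sub_apply, smul_apply, smul_eq_mul]
  ring

lemma pot_sub_metricForm_isLittleO (β : Fin n → Fin l) (p : Fin l → ℕ) (hu : HasDerivAt u u' 0)
    (hv : HasDerivAt v v' 0) (hu0 : u 0 = 0) (hv0 : v 0 = 0) :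
    (fun s => pot β p (u s) (v s) - metricForm β p (u s) (v s) - s ^ 4 / 2 * quarticForm β p u' v')
      =o[𝓝 0] fun s => s ^ 4 := by
  have hterm : ∀ i, (fun s => -log (1 - blockDot β i (u s) (v s)) - blockDot β i (u s) (v s)
      - s ^ 4 / 2 * blockDot β i u' v' ^ 2) =o[𝓝 0] fun s => s ^ 4 := fun i => by
    set d : ℂ → ℂ := fun s => blockDot β i (u s) (v s)
    have hd := blockDot_sub_isLittleO β i hu hv hu0 hv0
    have hlead : (fun s : ℂ => s ^ 2 * blockDot β i u' v') =O[𝓝 0] fun s => s ^ 2 :=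
      ((isBigO_refl _ _).const_mul_left (blockDot β i u' v')).congr_left fun s => mul_comm _ _
    have hdO : d =O[𝓝 0] fun s => s ^ 2 := by simpa using hd.isBigO.add hlead
    have hd0 : Tendsto d (𝓝 0) (𝓝 0) :=
      hdO.trans_tendsto (by simpa using (continuous_pow 2).tendsto (0 : ℂ))
    have hlog : (fun s => -log (1 - d s) - d s - d s ^ 2 / 2) =o[𝓝 0] fun s => s ^ 4 :=
      (neg_log_one_sub_isLittleO.comp_tendsto hd0).trans_isBigO
        ((hdO.pow 2).congr_right fun s => by ring)
    have hsq : (fun s => (d s - s ^ 2 * blockDot β i u' v') * (d s + s ^ 2 * blockDot β i u' v'))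
        =o[𝓝 0] fun s => s ^ 4 :=
      (hd.mul_isBigO (hdO.add hlead)).congr_right fun s => by ring
    refine (hlog.add (hsq.const_mul_left 2⁻¹)).congr_left fun s => ?_
    ring
  refine (IsLittleO.fun_sum fun i (_ : i ∈ Finset.univ) =>
    (hterm i).const_mul_left (p i : ℂ)).congr_left fun s => ?_
  simp only [pot, metricForm_apply, quarticForm, Finset.mul_sum, ← Finset.sum_neg_distrib,
    ← Finset.sum_sub_distrib]
  exact Finset.sum_congr rfl fun i _ => by ring

lemma neg_pot_smul_isLittleO {β : Fin n → Fin l} {p : Fin l → ℕ} {z w : Fin n → ℂ}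
    (hzw : metricForm β p z w = 0) :
    (fun s : ℂ => -pot β p (s • z) (s • w) + s ^ 4 / 2 * quarticForm β p z w)
      =o[𝓝 0] fun s => s ^ 4 := by
  have hsmul : ∀ z : Fin n → ℂ, HasDerivAt (fun s : ℂ => s • z) z 0 := fun z => by
    simpa using (hasDerivAt_id (0 : ℂ)).smul_const z
  refine (pot_sub_metricForm_isLittleO β p (hsmul z) (hsmul w) (zero_smul _ _)
    (zero_smul _ _)).neg_left.congr_left fun s => ?_
  simp only [map_smul, smul_apply, hzw, smul_zero, sub_zero]
  ring

lemma neg_pot_smul_isBigO {β : Fin n → Fin l} {p : Fin l → ℕ} {z w : Fin n → ℂ}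
    (hzw : metricForm β p z w = 0) :
    (fun s : ℂ => -pot β p (s • z) (s • w)) =O[𝓝 0] fun s => s ^ 4 := by
  have hlead : (fun s : ℂ => s ^ 4 / 2 * quarticForm β p z w) =O[𝓝 0] fun s => s ^ 4 :=
    ((isBigO_refl _ _).const_mul_left (quarticForm β p z w / 2)).congr_left fun s => by ring
  simpa using (neg_pot_smul_isLittleO hzw).isBigO.sub hlead

lemma eq_zero_of_pow_mul_isLittleO {k : ℕ} {c : ℂ}
    (h : (fun s : ℂ => s ^ k * c) =o[𝓝 0] fun s => s ^ k) : c = 0 := by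
  have hquot := h.tendsto_div_nhds_zero.mono_left (nhdsWithin_le_nhds (s := {0}ᶜ))
  refine tendsto_nhds_unique (tendsto_const_nhds.congr' ?_) hquot
  filter_upwards [self_mem_nhdsWithin] with s hs
  rw [mul_div_cancel_left₀ _ (pow_ne_zero k hs)]

end Expansion

section ConjMap
variable {n : ℕ} {H : (Fin n → ℂ) × ℂ → (Fin n → ℂ) × ℂ}

/-- The conjugate map `x ↦ star (H (star x))`, holomorphic when `H` is. -/
def conjMap (H : (Fin n → ℂ) × ℂ → (Fin n → ℂ) × ℂ) (x : (Fin n → ℂ) × ℂ) : (Fin n → ℂ) × ℂ :=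
  star (H (star x))

lemma conjMap_zero (h : H 0 = 0) : conjMap H 0 = 0 := by
  simp [conjMap, h]

lemma differentiableAt_conjMap {x : (Fin n → ℂ) × ℂ} (h : DifferentiableAt ℂ H (star x)) :
    DifferentiableAt ℂ (conjMap H) x := by
  simpa only [star_star] using! h.star_star

lemma eventually_differentiableAt_conjMap (h : ∀ᶠ x in 𝓝 0, DifferentiableAt ℂ H x) :
    ∀ᶠ x in 𝓝 0, DifferentiableAt ℂ (conjMap H) x :=
  ((continuous_star.tendsto' 0 0 (star_zero _)).eventually h).mono fun _ =>
    differentiableAt_conjMap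

lemma fderiv_conjMap_zero (h : DifferentiableAt ℂ H 0) (x : (Fin n → ℂ) × ℂ) :
    fderiv ℂ (conjMap H) 0 x = star (fderiv ℂ H 0 (star x)) := by
  have hstar := h.hasFDerivAt.star_star
  rw [star_zero] at hstar
  exact congrArg (· x) hstar.fderiv

end ConjMap

section CircleMapGerm
variable {n l l' : ℕ} {β₁ : Fin n → Fin l} {p : Fin l → ℕ} {β₂ : Fin n → Fin l'} {q : Fin l' → ℕ}
  {H : (Fin n → ℂ) × ℂ → (Fin n → ℂ) × ℂ} {x₀ : (Fin n → ℂ) × ℂ}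

/-- `H` is holomorphic near the point `x₀` of the first circle bundle and maps points of the first
circle bundle near `x₀` into the second one, in the logarithmic fibre coordinates. -/
structure IsCircleMapAt (β₁ : Fin n → Fin l) (p : Fin l → ℕ) (β₂ : Fin n → Fin l') (q : Fin l' → ℕ)
    (H : (Fin n → ℂ) × ℂ → (Fin n → ℂ) × ℂ) (x₀ : (Fin n → ℂ) × ℂ) : Prop where
  mem_source : x₀.1 ∈ prodBalls β₁
  mem_target : (H x₀).1 ∈ prodBalls β₂
  isRealPt : IsRealPt β₁ p x₀
  differentiableAt : ∀ᶠ x in 𝓝 x₀, DifferentiableAt ℂ H x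
  map_isRealPt : ∀ᶠ x in 𝓝 x₀, IsRealPt β₁ p x → IsRealPt β₂ q (H x)

/-- The derivative at `0` of the base component of `H` along the base. -/
def baseDeriv (H : (Fin n → ℂ) × ℂ → (Fin n → ℂ) × ℂ) : (Fin n → ℂ) →L[ℂ] (Fin n → ℂ) :=
  .fst ℂ _ _ ∘L fderiv ℂ H 0 ∘L .inl ℂ _ _

/-- The derivative at `0` of the base component of `H` along the fibre. -/
def baseDrift (H : (Fin n → ℂ) × ℂ → (Fin n → ℂ) × ℂ) : Fin n → ℂ :=
  (fderiv ℂ H 0 (0, 1)).1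

/-- The derivative at `0` of the fibre component of `H` along the fibre. -/
def fibreScale (H : (Fin n → ℂ) × ℂ → (Fin n → ℂ) × ℂ) : ℂ :=
  (fderiv ℂ H 0 (0, 1)).2

namespace IsCircleMapAt
variable (hH : IsCircleMapAt β₁ p β₂ q H 0) (h0 : H 0 = 0)
include hH h0

lemma eventually_onSegre_map :
    ∀ᶠ P in 𝓝 0, OnSegre β₁ p P → OnSegre β₂ q (H P.1, conjMap H P.2) := by
  have hfst := continuous_fst.tendsto' (0 : ((Fin n → ℂ) × ℂ) × ((Fin n → ℂ) × ℂ)) 0 rfl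
  have hsnd := continuous_snd.tendsto' (0 : ((Fin n → ℂ) × ℂ) × ((Fin n → ℂ) × ℂ)) 0 rfl
  have hd₁ := (hfst.eventually hH.differentiableAt).mono fun P hP => hP.comp P differentiableAt_fst
  have hd₂ := (hsnd.eventually (eventually_differentiableAt_conjMap hH.differentiableAt)).mono
    fun P hP => hP.comp P differentiableAt_snd
  refine eventually_onSegre_imp ?_ (hH.map_isRealPt.mono fun x hx hreal => ?_)
  · filter_upwards [hd₁, hd₂, eventually_mem_prodBalls (continuous_fst.continuousAt.comp
      hd₁.self_of_nhds.continuousAt) (by simpa [h0] using zero_mem_prodBalls β₂),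
      eventually_mem_prodBalls (continuous_fst.continuousAt.comp hd₂.self_of_nhds.continuousAt)
        (by simpa [conjMap_zero h0] using zero_mem_prodBalls β₂)] with P h₁ h₂ hm₁ hm₂
    exact (h₁.snd.add h₂.snd).add (differentiableAt_pot q h₁.fst h₂.fst hm₁ hm₂)
  · have hpair : conjMap H (star x) = star (H x) := by rw [conjMap, star_star]
    simpa only [IsRealPt, OnSegre, hpair] using hx hreal

lemma eventually_snd_eq_zero : ∀ᶠ z in 𝓝 0, (H (z, 0)).2 = 0 := by
  have hlift : Tendsto (fun z : Fin n → ℂ => ((z, (0 : ℂ)), (0 : (Fin n → ℂ) × ℂ))) (𝓝 0) (𝓝 0) :=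
    Continuous.tendsto' (by fun_prop) _ _ rfl
  filter_upwards [hlift.eventually (hH.eventually_onSegre_map h0)] with z hz
  simpa [OnSegre, conjMap_zero h0] using hz (by simp [OnSegre])

lemma eventually_pot_map : ∀ᶠ P : (Fin n → ℂ) × (Fin n → ℂ) in 𝓝 0,
    (H (P.1, -pot β₁ p P.1 P.2)).2 +
      pot β₂ q (H (P.1, -pot β₁ p P.1 P.2)).1 (conjMap H (P.2, 0)).1 = 0 := by
  have hpot : ContinuousAt (fun P : (Fin n → ℂ) × (Fin n → ℂ) => pot β₁ p P.1 P.2) 0 :=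
    (hasFDerivAt_pot p (zero_mem_prodBalls β₁) (zero_mem_prodBalls β₁)).continuousAt
  have hlift : Tendsto (fun P : (Fin n → ℂ) × (Fin n → ℂ) =>
      ((P.1, -pot β₁ p P.1 P.2), (P.2, (0 : ℂ)))) (𝓝 0) (𝓝 0) := by
    have hcont : ContinuousAt (fun P : (Fin n → ℂ) × (Fin n → ℂ) =>
        ((P.1, -pot β₁ p P.1 P.2), (P.2, (0 : ℂ)))) 0 := by fun_prop
    simpa [ContinuousAt] using! hcont
  have hsnd : Tendsto (fun P : (Fin n → ℂ) × (Fin n → ℂ) => star P.2) (𝓝 0) (𝓝 0) :=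
    Continuous.tendsto' (by fun_prop) _ _ (by simp)
  filter_upwards [hlift.eventually (hH.eventually_onSegre_map h0),
    hsnd.eventually (hH.eventually_snd_eq_zero h0)] with P hP hw
  have hw' : (conjMap H (P.2, 0)).2 = 0 := by simp [conjMap, hw, Prod.star_def]
  simpa [OnSegre, hw'] using hP (by simp [OnSegre])

lemma fderiv_zero_apply (v : Fin n → ℂ) (t : ℂ) :
    fderiv ℂ H 0 (v, t) = (baseDeriv H v + t • baseDrift H, t * fibreScale H) := by
  have hsnd : (fderiv ℂ H 0 (v, 0)).2 = 0 := by
    have hd : HasFDerivAt (fun z : Fin n → ℂ => (H (z, 0)).2) _ 0 :=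
      (hH.differentiableAt.self_of_nhds.hasFDerivAt.comp (0 : Fin n → ℂ)
        (ContinuousLinearMap.inl ℂ (Fin n → ℂ) ℂ).hasFDerivAt).snd
    exact congrArg (· v) (hd.unique ((hasFDerivAt_const 0 _).congr_of_eventuallyEq
      (hH.eventually_snd_eq_zero h0)))
  have hsplit : ((v, t) : (Fin n → ℂ) × ℂ) = (v, 0) + t • (0, 1) := by simp
  rw [hsplit, map_add, map_smul]
  exact Prod.ext rfl (by simp [fibreScale, hsnd])

lemma hasDerivAt_conjMap_fst (w : Fin n → ℂ) :
    HasDerivAt (fun s : ℂ => (conjMap H (s • w, 0)).1) (star (baseDeriv H (star w))) 0 := by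
  have hline : HasDerivAt (fun s : ℂ => (s • w, (0 : ℂ))) (w, 0) 0 := by
    simpa using ((hasDerivAt_id (0 : ℂ)).smul_const w).prodMk (hasDerivAt_const 0 (0 : ℂ))
  have hd := hH.differentiableAt.self_of_nhds
  have hconj := (differentiableAt_conjMap (x := 0) (by rwa [star_zero])).hasFDerivAt
  have hcomp : HasDerivAt (fun s : ℂ => (conjMap H (s • w, 0)).1) _ 0 :=
    (ContinuousLinearMap.fst ℂ (Fin n → ℂ) ℂ).hasFDerivAt.comp_hasDerivAt (0 : ℂ)
      (hconj.comp_hasDerivAt_of_eq (0 : ℂ) hline (by simp [Prod.zero_eq_mk]))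
  have hval : fderiv ℂ H 0 (star (w, 0)) = (baseDeriv H (star w), 0) := by
    simpa [Prod.star_def] using hH.fderiv_zero_apply h0 (star w) 0
  refine hcomp.congr_deriv ?_
  rw [fderiv_conjMap_zero hd, hval]
  rfl

lemma eventually_conjMap_mem_prodBalls : ∀ᶠ w in 𝓝 0, (conjMap H (w, 0)).1 ∈ prodBalls β₂ := by
  have hd := (differentiableAt_conjMap (x := 0)
    (by rw [star_zero]; exact hH.differentiableAt.self_of_nhds)).continuousAt
  have hcont : ContinuousAt (fun w : Fin n → ℂ => (conjMap H (w, 0)).1) 0 :=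
    continuous_fst.continuousAt.comp
      (ContinuousAt.comp (f := fun w : Fin n → ℂ => (w, (0 : ℂ))) hd (by fun_prop))
  exact eventually_mem_prodBalls hcont
    (by simpa [← Prod.zero_eq_mk, conjMap_zero h0] using zero_mem_prodBalls β₂)

lemma metricForm_conjMap : ∀ᶠ w in 𝓝 0, ∀ v,
    metricForm β₂ q (baseDeriv H v - metricForm β₁ p v w • baseDrift H) (conjMap H (w, 0)).1 =
      fibreScale H * metricForm β₁ p v w := by
  have hpolar : ∀ᶠ w in 𝓝 0, ∀ᶠ z in 𝓝 0, (H (z, -pot β₁ p z w)).2 +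
      pot β₂ q (H (z, -pot β₁ p z w)).1 (conjMap H (w, 0)).1 = 0 :=
    ((continuous_swap.tendsto' ((0, 0) : (Fin n → ℂ) × (Fin n → ℂ)) 0 rfl).eventually
      (hH.eventually_pot_map h0)).curry_nhds
  filter_upwards [hpolar, hH.eventually_conjMap_mem_prodBalls h0,
    (isOpen_prodBalls β₁).mem_nhds (zero_mem_prodBalls β₁)] with w hw hm hwb v
  set g := (conjMap H (w, 0)).1
  have hpot₁ : HasFDerivAt (fun z => pot β₁ p z w) (metricForm β₁ p w) 0 := by
    simpa only [dpot_zero_left] using hasFDerivAt_pot_left p (zero_mem_prodBalls β₁) hwb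
  have hline : HasFDerivAt (fun z => (z, -pot β₁ p z w)) _ 0 := (hasFDerivAt_id 0).prodMk hpot₁.neg
  have hline0 : ((0 : Fin n → ℂ), -pot β₁ p 0 w) = 0 := by simp
  have hd : HasFDerivAt H (fderiv ℂ H 0) (0, -pot β₁ p 0 w) := by
    rw [hline0]
    exact hH.differentiableAt.self_of_nhds.hasFDerivAt
  have hHz : HasFDerivAt (fun z => H (z, -pot β₁ p z w)) _ 0 := hd.comp (0 : Fin n → ℂ) hline
  have hpot₂ : HasFDerivAt (fun u => pot β₂ q u g) (metricForm β₂ q g)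
      (H (0, -pot β₁ p 0 w)).1 := by
    rw [hline0, h0, Prod.fst_zero, ← dpot_zero_left]
    exact hasFDerivAt_pot_left q (zero_mem_prodBalls β₂) hm
  have hsum : HasFDerivAt (fun z => (H (z, -pot β₁ p z w)).2 +
      pot β₂ q (H (z, -pot β₁ p z w)).1 g) _ 0 :=
    hHz.snd.add (HasFDerivAt.comp (g := fun u => pot β₂ q u g) 0 hpot₂ hHz.fst)
  have hv : -(metricForm β₁ p w v * fibreScale H) + (metricForm β₂ q g (baseDeriv H v) +
      -(metricForm β₁ p w v * metricForm β₂ q g (baseDrift H))) = 0 := by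
    simpa [hH.fderiv_zero_apply h0] using
      congrArg (· v) (hsum.unique ((hasFDerivAt_const 0 _).congr_of_eventuallyEq hw))
  rw [metricForm_comm β₁ p v w, metricForm_comm β₂ q _ g, map_sub, map_smul, smul_eq_mul]
  linear_combination hv

lemma metricForm_baseDeriv (v w : Fin n → ℂ) :
    metricForm β₂ q (baseDeriv H v) (star (baseDeriv H (star w))) =
      fibreScale H * metricForm β₁ p v w := by
  have hscale : Tendsto (fun s : ℂ => s • w) (𝓝 0) (𝓝 0) :=
    Continuous.tendsto' (by fun_prop) _ _ (zero_smul _ _)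
  have hid : ∀ᶠ s : ℂ in 𝓝 0,
      metricForm β₂ q (baseDeriv H v) (conjMap H (s • w, 0)).1 -
        s * (metricForm β₁ p v w * metricForm β₂ q (baseDrift H) (conjMap H (s • w, 0)).1) =
      s * (fibreScale H * metricForm β₁ p v w) := by
    filter_upwards [hscale.eventually (hH.metricForm_conjMap h0)] with s hs
    have hs' := hs v
    simp only [map_smul, map_sub, sub_apply, smul_apply, smul_eq_mul] at hs'
    linear_combination hs'
  have hconj := fun u => ((metricForm β₂ q u).hasFDerivAt).comp_hasDerivAt (0 : ℂ)
    (hH.hasDerivAt_conjMap_fst h0 w)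
  have hleft := (hconj (baseDeriv H v)).sub
    ((hasDerivAt_id' (0 : ℂ)).mul ((hconj (baseDrift H)).const_mul (metricForm β₁ p v w)))
  have hright := (hasDerivAt_id' (0 : ℂ)).mul_const (fibreScale H * metricForm β₁ p v w)
  have huniq := hleft.unique (hright.congr_of_eventuallyEq hid)
  simpa [← Prod.zero_eq_mk, conjMap_zero h0] using huniq

lemma fibreScale_mul_metricSq (v : Fin n → ℂ) :
    (metricSq β₂ q (baseDeriv H v) : ℂ) = fibreScale H * metricSq β₁ p v := by
  simpa only [star_star, metricForm_self_star] using hH.metricForm_baseDeriv h0 v (star v)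

lemma exists_fibreScale_eq [NeZero n] (hp : ∀ i, 0 < p i) :
    ∃ r : ℝ, 0 ≤ r ∧ fibreScale H = r := by
  set v : Fin n → ℂ := Pi.single 0 1
  have hv : metricSq β₁ p v ≠ 0 := fun h =>
    (by simp [v] : v ≠ 0) (eq_zero_of_metricSq_eq_zero hp h)
  refine ⟨metricSq β₂ q (baseDeriv H v) / metricSq β₁ p v,
    div_nonneg (metricSq_nonneg ..) (metricSq_nonneg ..), ?_⟩
  rw [ofReal_div, hH.fibreScale_mul_metricSq h0, mul_div_cancel_right₀ _ (ofReal_ne_zero.2 hv)]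

lemma baseDeriv_eq_zero (hq : ∀ j, 0 < q j) (hscale : fibreScale H = 0) : baseDeriv H = 0 := by
  ext1 v
  refine eq_zero_of_metricSq_eq_zero (β := β₂) hq (ofReal_injective ?_)
  rw [hH.fibreScale_mul_metricSq h0, hscale, zero_mul, ofReal_zero]

lemma baseDeriv_surjective (hp : ∀ i, 0 < p i) (hscale : fibreScale H ≠ 0) :
    Function.Surjective (baseDeriv H) :=
  surjective_of_metricSq_map hp hscale (hH.fibreScale_mul_metricSq h0)

lemma eventually_conjMap_eq_smul (hp : ∀ i, 0 < p i) (hq : ∀ j, 0 < q j)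
    (hscale : fibreScale H ≠ 0) :
    ∀ᶠ w in 𝓝 0, ∃ c : ℂ, (conjMap H (w, 0)).1 = c • star (baseDeriv H (star w)) := by
  filter_upwards [hH.metricForm_conjMap h0] with w hw
  refine ⟨1 + metricForm β₂ q (baseDrift H) (conjMap H (w, 0)).1 / fibreScale H,
    eq_of_forall_metricForm_eq (β := β₂) hq fun u => ?_⟩
  obtain ⟨v, rfl⟩ := hH.baseDeriv_surjective h0 hp hscale u
  have hwv := hw v
  simp only [map_sub, map_smul, sub_apply, smul_apply, smul_eq_mul] at hwv
  rw [map_smul, smul_apply, metricForm_comm, metricForm_comm β₂ q (star _),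
    hH.metricForm_baseDeriv h0, smul_eq_mul]
  field_simp
  linear_combination hwv

lemma eventually_fst_eq_smul (hp : ∀ i, 0 < p i) (hq : ∀ j, 0 < q j) (hscale : fibreScale H ≠ 0) :
    ∀ᶠ z in 𝓝 0, ∃ c : ℂ, (H (z, 0)).1 = c • baseDeriv H z := by
  have hstar := continuous_star.tendsto' (0 : Fin n → ℂ) 0 (star_zero _)
  filter_upwards [hstar.eventually (hH.eventually_conjMap_eq_smul h0 hp hq hscale)]
    with z ⟨c, hc⟩
  refine ⟨star c, star_injective ?_⟩
  rw [star_smul, star_star]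
  simpa [conjMap, Prod.star_def] using hc

lemma metricForm_fst_conjMap_eq_zero (hp : ∀ i, 0 < p i) (hq : ∀ j, 0 < q j)
    (hscale : fibreScale H ≠ 0) {z w : Fin n → ℂ} (hzw : metricForm β₁ p z w = 0) :
    ∀ᶠ s : ℂ in 𝓝 0, metricForm β₂ q (H (s • z, 0)).1 (conjMap H (s • w, 0)).1 = 0 := by
  have hline : ∀ z : Fin n → ℂ, Tendsto (fun s : ℂ => s • z) (𝓝 0) (𝓝 0) := fun z =>
    Continuous.tendsto' (by fun_prop) _ _ (zero_smul _ _)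
  filter_upwards [(hline z).eventually (hH.eventually_fst_eq_smul h0 hp hq hscale),
    (hline w).eventually (hH.eventually_conjMap_eq_smul h0 hp hq hscale)] with s ⟨c, hc⟩ ⟨c', hc'⟩
  rw [hc, hc', map_smul, map_smul, smul_apply, hH.metricForm_baseDeriv h0]
  simp [hzw]

omit h0 in
lemma sub_sub_fderiv_isLittleO {κ : ℂ → ℂ} (hκ : Tendsto κ (𝓝 0) (𝓝 0)) (z : Fin n → ℂ) :
    (fun s => H (s • z, κ s) - H (s • z, 0) - κ s • fderiv ℂ H 0 (0, 1)) =o[𝓝 0] κ := by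
  have hline : Tendsto (fun s : ℂ => s • z) (𝓝 0) (𝓝 0) :=
    Continuous.tendsto' (by fun_prop) _ _ (zero_smul _ _)
  have hpair : Tendsto (fun s => ((s • z, κ s), (s • z, (0 : ℂ)))) (𝓝 0) (𝓝 (0, 0)) :=
    (hline.prodMk_nhds hκ).prodMk_nhds (hline.prodMk_nhds tendsto_const_nhds)
  have hsub : ∀ s, (s • z, κ s) - (s • z, 0) = κ s • ((0, 1) : (Fin n → ℂ) × ℂ) := fun s => by
    simp
  have hstrict := (hasStrictFDerivAt_of_eventually hH.differentiableAt).isLittleO.comp_tendsto hpair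
  simp only [Function.comp_def, hsub, map_smul] at hstrict
  exact hstrict.trans_isBigO (.of_bound' (.of_forall fun s => by simp))

lemma hasDerivAt_fst_line {κ : ℂ → ℂ} (hκ : HasDerivAt κ 0 0) (hκ0 : κ 0 = 0) (z : Fin n → ℂ) :
    HasDerivAt (fun s => (H (s • z, κ s)).1) (baseDeriv H z) 0 := by
  have hline : HasDerivAt (fun s : ℂ => (s • z, κ s)) (z, 0) 0 := by
    simpa using ((hasDerivAt_id (0 : ℂ)).smul_const z).prodMk hκ
  have hcomp : HasDerivAt (fun s : ℂ => (H (s • z, κ s)).1) _ 0 :=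
    (ContinuousLinearMap.fst ℂ (Fin n → ℂ) ℂ).hasFDerivAt.comp_hasDerivAt (0 : ℂ)
      (hH.differentiableAt.self_of_nhds.hasFDerivAt.comp_hasDerivAt_of_eq (0 : ℂ) hline
        (by simp [hκ0, Prod.zero_eq_mk]))
  refine hcomp.congr_deriv ?_
  simp [hH.fderiv_zero_apply h0]

open Asymptotics in
lemma metricForm_fst_conjMap_isLittleO (hp : ∀ i, 0 < p i) (hq : ∀ j, 0 < q j)
    (hscale : fibreScale H ≠ 0) {z w : Fin n → ℂ} (hzw : metricForm β₁ p z w = 0) {κ : ℂ → ℂ}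
    (hκ : Tendsto κ (𝓝 0) (𝓝 0)) :
    (fun s => metricForm β₂ q (H (s • z, κ s)).1 (conjMap H (s • w, 0)).1) =o[𝓝 0] κ := by
  set v : ℂ → Fin n → ℂ := fun s => (conjMap H (s • w, 0)).1
  have hbase : (fun s => (H (s • z, κ s)).1 - (H (s • z, 0)).1) =O[𝓝 0] κ := by
    have hsub := (hH.sub_sub_fderiv_isLittleO hκ z).isBigO.add
      (f₂ := fun s => κ s • fderiv ℂ H 0 (0, 1))
      (.of_bound ‖fderiv ℂ H 0 (0, 1)‖ (.of_forall fun s => by rw [norm_smul, mul_comm]))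
    simpa using hsub.prod_left_fst
  have hv : v =o[𝓝 0] fun _ => (1 : ℂ) := by
    refine (isLittleO_one_iff ℂ).2 ?_
    simpa [v, ← Prod.zero_eq_mk, conjMap_zero h0] using
      (hH.hasDerivAt_conjMap_fst h0 w).continuousAt.tendsto
  refine (isLittleO_bilinear (metricForm β₂ q) hv hbase).congr' ?_ (.of_forall fun s => one_mul _)
  filter_upwards [hH.metricForm_fst_conjMap_eq_zero h0 hp hq hscale hzw] with s hs
  rw [metricForm_comm, map_sub, sub_apply, hs, sub_zero]

open Asymptotics in
lemma quarticForm_baseDeriv (hp : ∀ i, 0 < p i) (hq : ∀ j, 0 < q j) (hscale : fibreScale H ≠ 0)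
    {z w : Fin n → ℂ} (hzw : metricForm β₁ p z w = 0) :
    quarticForm β₂ q (baseDeriv H z) (star (baseDeriv H (star w))) =
      fibreScale H * quarticForm β₁ p z w := by
  set κ : ℂ → ℂ := fun s => -pot β₁ p (s • z) (s • w)
  have hκO : κ =O[𝓝 0] fun s => s ^ 4 := neg_pot_smul_isBigO hzw
  have hκ0 : κ 0 = 0 := by simp [κ]
  have hκ : Tendsto κ (𝓝 0) (𝓝 0) :=
    hκO.trans_tendsto (by simpa using (continuous_pow 4).tendsto (0 : ℂ))
  have hκ' : HasDerivAt κ 0 0 := by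
    rw [hasDerivAt_iff_isLittleO]
    simpa [hκ0] using hκO.trans_isLittleO (isLittleO_pow_id (by norm_num : 1 < 4))
  have hsnd : (fun s => (H (s • z, κ s)).2 - (H (s • z, 0)).2 - κ s * fibreScale H)
      =o[𝓝 0] fun s => s ^ 4 :=
    ((hH.sub_sub_fderiv_isLittleO hκ z).trans_isBigO hκO).prod_left_snd
  have hmetric :=
    (hH.metricForm_fst_conjMap_isLittleO h0 hp hq hscale hzw hκ).trans_isBigO hκO
  have hpot := pot_sub_metricForm_isLittleO β₂ q (hH.hasDerivAt_fst_line h0 hκ' hκ0 z)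
    (hH.hasDerivAt_conjMap_fst h0 w) (by simp [hκ0, ← Prod.zero_eq_mk, h0])
    (by simp [← Prod.zero_eq_mk, conjMap_zero h0])
  have hline : ∀ z w : Fin n → ℂ, Tendsto (fun s : ℂ => (s • z, s • w)) (𝓝 0) (𝓝 0) := fun z w =>
    Continuous.tendsto' (by fun_prop) _ _ (by simp)
  refine (sub_eq_zero.1 (eq_zero_of_pow_mul_isLittleO (k := 4) ?_)).symm
  refine (((((neg_pot_smul_isLittleO hzw).const_mul_left (fibreScale H)).add hsnd).add
    (hpot.add hmetric)).const_mul_left 2).congr' ?_ .rfl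
  filter_upwards [(hline z w).eventually (hH.eventually_pot_map h0),
    ((continuous_fst.tendsto' 0 0 rfl).comp (hline z w)).eventually
      (hH.eventually_snd_eq_zero h0)] with s hs hs0
  simp only [Function.comp_apply] at hs0
  simp only [κ] at hs ⊢
  rw [hs0]
  linear_combination 2 * hs

lemma symbolMap_baseDeriv [NeZero n] (hp : ∀ i, 0 < p i) (hq : ∀ j, 0 < q j)
    (hscale : fibreScale H ≠ 0) :
    SymbolMap β₁ p β₂ q (baseDeriv H) (fibreScale H).re := by
  obtain ⟨r, hr, hscale_eq⟩ := hH.exists_fibreScale_eq h0 hp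
  have hre : ((fibreScale H).re : ℂ) = fibreScale H := by rw [hscale_eq, ofReal_re]
  refine ⟨?_, fun z w => ?_, fun z w hzw => ?_⟩
  · rw [hscale_eq, ofReal_re]
    exact hr.lt_of_ne fun h => hscale (by rw [hscale_eq, ← h, ofReal_zero])
  · simpa only [star_star, hre] using hH.metricForm_baseDeriv h0 z (star w)
  · simpa only [star_star, hre] using hH.quarticForm_baseDeriv h0 hp hq hscale hzw

end IsCircleMapAt
end CircleMapGerm

section Recenter
variable {n l l' : ℕ} {β₁ : Fin n → Fin l} {p : Fin l → ℕ} {β₂ : Fin n → Fin l'} {q : Fin l' → ℕ}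
  {H : (Fin n → ℂ) × ℂ → (Fin n → ℂ) × ℂ} {x₀ : (Fin n → ℂ) × ℂ}

/-- The map `H` near the real point `x₀`, in automorphic coordinates that move `x₀` and `H x₀`
to `0`. -/
def recenter (β₁ : Fin n → Fin l) (p : Fin l → ℕ) (β₂ : Fin n → Fin l') (q : Fin l' → ℕ)
    (H : (Fin n → ℂ) × ℂ → (Fin n → ℂ) × ℂ) (x₀ x : (Fin n → ℂ) × ℂ) : (Fin n → ℂ) × ℂ :=
  logShift β₂ q (H x₀).1 (conj (H x₀).2) (H (logShift β₁ p x₀.1 x₀.2 x))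

/-- The polarization of the fibre scales of the recentred maps of `H`. -/
def segreScale (β₂ : Fin n → Fin l') (q : Fin l' → ℕ)
    (H : (Fin n → ℂ) × ℂ → (Fin n → ℂ) × ℂ) (P : ((Fin n → ℂ) × ℂ) × ((Fin n → ℂ) × ℂ)) : ℂ :=
  (fderiv ℂ H P.1 (0, 1)).2 +
    dpot β₂ q (H P.1).1 (conjMap H P.2).1 (fderiv ℂ H P.1 (0, 1)).1

lemma tendsto_logShift_zero (β : Fin n → Fin l) (p : Fin l → ℕ) {x : (Fin n → ℂ) × ℂ}
    (hx : x.1 ∈ prodBalls β) : Tendsto (logShift β p x.1 x.2) (𝓝 0) (𝓝 x) := by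
  have hcont := (differentiableAt_logShift (p := p) hx x.2 (x := 0)
    (zero_mem_prodBalls β)).continuousAt
  rwa [ContinuousAt, logShift_zero] at hcont

lemma logShift_conj_self {β : Fin n → Fin l} {p : Fin l → ℕ} {x : (Fin n → ℂ) × ℂ}
    (hxb : x.1 ∈ prodBalls β) (hx : IsRealPt β p x) :
    logShift β p x.1 (conj x.2) x = 0 := by
  have hc : conj x.2 + x.2 + pot β p x.1 (star x.1) = 0 := by
    rw [add_comm (conj x.2)]
    exact isRealPt_iff.1 hx
  simpa only [logShift_zero] using logShift_logShift (x := 0) hxb hc (zero_mem_prodBalls β)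

lemma tendsto_logShift_conj {β : Fin n → Fin l} {p : Fin l → ℕ} {x : (Fin n → ℂ) × ℂ}
    (hxb : x.1 ∈ prodBalls β) (hx : IsRealPt β p x) :
    Tendsto (logShift β p x.1 (conj x.2)) (𝓝 x) (𝓝 0) := by
  have hcont := (differentiableAt_logShift (p := p) hxb (conj x.2) (x := x) hxb).continuousAt
  rwa [ContinuousAt, logShift_conj_self hxb hx] at hcont

namespace IsCircleMapAt

lemma isRealPt_map (hH : IsCircleMapAt β₁ p β₂ q H x₀) : IsRealPt β₂ q (H x₀) :=
  hH.map_isRealPt.self_of_nhds hH.isRealPt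

lemma continuousAt (hH : IsCircleMapAt β₁ p β₂ q H x₀) : ContinuousAt H x₀ :=
  hH.differentiableAt.self_of_nhds.continuousAt

lemma eventually_isCircleMapAt (hH : IsCircleMapAt β₁ p β₂ q H x₀) :
    ∀ᶠ x in 𝓝 x₀, IsRealPt β₁ p x → IsCircleMapAt β₁ p β₂ q H x := by
  filter_upwards [eventually_mem_prodBalls continuous_fst.continuousAt hH.mem_source,
    eventually_mem_prodBalls (continuous_fst.continuousAt.comp hH.continuousAt) hH.mem_target,
    hH.differentiableAt.eventually_nhds, hH.map_isRealPt.eventually_nhds] with x h₁ h₂ hd hr hx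
  exact ⟨h₁, h₂, hx, hd, hr⟩

lemma recenter_zero (hH : IsCircleMapAt β₁ p β₂ q H x₀) : recenter β₁ p β₂ q H x₀ 0 = 0 := by
  rw [recenter, logShift_zero, Prod.mk.eta, logShift_conj_self hH.mem_target hH.isRealPt_map]

lemma isCircleMapAt_recenter (hH : IsCircleMapAt β₁ p β₂ q H x₀) :
    IsCircleMapAt β₁ p β₂ q (recenter β₁ p β₂ q H x₀) 0 := by
  have hS := tendsto_logShift_zero β₁ p hH.mem_source
  have hb₁ : ∀ᶠ x : (Fin n → ℂ) × ℂ in 𝓝 0, x.1 ∈ prodBalls β₁ :=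
    eventually_mem_prodBalls continuous_fst.continuousAt (zero_mem_prodBalls β₁)
  have hb₂ := hS.eventually (eventually_mem_prodBalls
    (continuous_fst.continuousAt.comp hH.continuousAt) hH.mem_target)
  refine ⟨zero_mem_prodBalls β₁, ?_, by simp [isRealPt_iff], ?_, ?_⟩
  · rw [hH.recenter_zero]
    exact zero_mem_prodBalls β₂
  · filter_upwards [hb₁, hb₂, hS.eventually hH.differentiableAt] with x h₁ h₂ hd
    exact (differentiableAt_logShift hH.mem_target _ h₂).comp x
      (hd.comp x (differentiableAt_logShift hH.mem_source _ h₁))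
  · filter_upwards [hb₁, hb₂, hS.eventually hH.map_isRealPt] with x h₁ h₂ hr hx
    exact isRealPt_logShift hH.mem_target (isRealPt_star_snd hH.isRealPt_map) h₂
      (hr (isRealPt_logShift hH.mem_source hH.isRealPt h₁ hx))

lemma eventually_eq_recenter (hH : IsCircleMapAt β₁ p β₂ q H x₀) :
    ∀ᶠ x in 𝓝 x₀, H x = logShift β₂ q (H x₀).1 (H x₀).2
      (recenter β₁ p β₂ q H x₀ (logShift β₁ p x₀.1 (conj x₀.2) x)) := by
  filter_upwards [eventually_mem_prodBalls continuous_fst.continuousAt hH.mem_source,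
    eventually_mem_prodBalls (continuous_fst.continuousAt.comp hH.continuousAt) hH.mem_target]
    with x h₁ h₂
  rw [recenter, logShift_logShift hH.mem_source (isRealPt_iff.1 hH.isRealPt) h₁,
    logShift_logShift hH.mem_target (isRealPt_iff.1 hH.isRealPt_map) h₂]

lemma fibreScale_recenter (hH : IsCircleMapAt β₁ p β₂ q H x₀) :
    fibreScale (recenter β₁ p β₂ q H x₀) = segreScale β₂ q H (x₀, star x₀) := by
  have hS := hasFDerivAt_logShift (p := p) hH.mem_source x₀.2 (x := 0) (zero_mem_prodBalls β₁)
  have hR := hasFDerivAt_logShift (p := q) hH.mem_target (conj (H x₀).2) hH.mem_target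
  have hHd : HasFDerivAt H (fderiv ℂ H x₀) (logShift β₁ p x₀.1 x₀.2 0) := by
    rw [logShift_zero]
    exact hH.differentiableAt.self_of_nhds.hasFDerivAt
  have hN : HasFDerivAt (recenter β₁ p β₂ q H x₀) _ 0 :=
    HasFDerivAt.comp (g := logShift β₂ q (H x₀).1 (conj (H x₀).2)) 0
      (by rw [logShift_zero]; exact hR) (hHd.comp 0 hS)
  rw [fibreScale, hN.fderiv]
  simp [segreScale, conjMap]

lemma fderiv_eq_recenter (hH : IsCircleMapAt β₁ p β₂ q H x₀) (v : Fin n → ℂ) (t : ℂ) :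
    fderiv ℂ H x₀ (v, t) = fderiv ℂ (logShift β₂ q (H x₀).1 (H x₀).2) 0
      (fderiv ℂ (recenter β₁ p β₂ q H x₀) 0
        (fderiv ℂ (mobius β₁ x₀.1) x₀.1 v, t + dpot β₁ p x₀.1 (star x₀.1) v)) := by
  have hR := hasFDerivAt_logShift (p := p) hH.mem_source (conj x₀.2) hH.mem_source
  have hR0 := logShift_conj_self hH.mem_source hH.isRealPt
  have hS : HasFDerivAt (logShift β₂ q (H x₀).1 (H x₀).2)
      (fderiv ℂ (logShift β₂ q (H x₀).1 (H x₀).2) 0)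
      (recenter β₁ p β₂ q H x₀ (logShift β₁ p x₀.1 (conj x₀.2) x₀)) := by
    rw [hR0, hH.recenter_zero]
    exact (differentiableAt_logShift hH.mem_target _ (zero_mem_prodBalls β₂)).hasFDerivAt
  have hN : HasFDerivAt (recenter β₁ p β₂ q H x₀) (fderiv ℂ (recenter β₁ p β₂ q H x₀) 0)
      (logShift β₁ p x₀.1 (conj x₀.2) x₀) := by
    rw [hR0]
    exact hH.isCircleMapAt_recenter.differentiableAt.self_of_nhds.hasFDerivAt
  have hcomp : HasFDerivAt (fun x => logShift β₂ q (H x₀).1 (H x₀).2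
      (recenter β₁ p β₂ q H x₀ (logShift β₁ p x₀.1 (conj x₀.2) x))) _ x₀ :=
    HasFDerivAt.comp (g := logShift β₂ q (H x₀).1 (H x₀).2) x₀ hS (hN.comp x₀ hR)
  rw [(hcomp.congr_of_eventuallyEq hH.eventually_eq_recenter).fderiv]
  simp

lemma fderiv_vertical (hH : IsCircleMapAt β₁ p β₂ q H x₀)
    (hdrift : baseDrift (recenter β₁ p β₂ q H x₀) = 0) :
    fderiv ℂ H x₀ (0, 1) = (0, fibreScale (recenter β₁ p β₂ q H x₀)) := by
  have hS := hasFDerivAt_logShift (p := q) hH.mem_target (H x₀).2 (x := 0) (zero_mem_prodBalls β₂)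
  rw [hH.fderiv_eq_recenter, map_zero, map_zero, add_zero,
    hH.isCircleMapAt_recenter.fderiv_zero_apply hH.recenter_zero, hS.fderiv]
  simp [hdrift]

lemma fderiv_tangent (hH : IsCircleMapAt β₁ p β₂ q H x₀)
    (hbase : baseDeriv (recenter β₁ p β₂ q H x₀) = 0) (v : Fin n → ℂ) :
    fderiv ℂ H x₀ (v, -dpot β₁ p x₀.1 (star x₀.1) v) = 0 := by
  rw [hH.fderiv_eq_recenter, neg_add_cancel,
    hH.isCircleMapAt_recenter.fderiv_zero_apply hH.recenter_zero, hbase]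
  simp only [zero_apply, zero_smul, add_zero, zero_mul, Prod.mk_zero_zero, map_zero]

end IsCircleMapAt
end Recenter

section Nondegenerate
variable {n l l' : ℕ} {β₁ : Fin n → Fin l} {p : Fin l → ℕ} {β₂ : Fin n → Fin l'} {q : Fin l' → ℕ}
  {H : (Fin n → ℂ) × ℂ → (Fin n → ℂ) × ℂ}

namespace IsCircleMapAt
variable (hH : IsCircleMapAt β₁ p β₂ q H 0) (h0 : H 0 = 0)
include hH h0

lemma eventually_differentiableAt_segreScale :
    ∀ᶠ P in 𝓝 0, DifferentiableAt ℂ (segreScale β₂ q H) P := by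
  have hfst := continuous_fst.tendsto' (0 : ((Fin n → ℂ) × ℂ) × ((Fin n → ℂ) × ℂ)) 0 rfl
  have hsnd := continuous_snd.tendsto' (0 : ((Fin n → ℂ) × ℂ) × ((Fin n → ℂ) × ℂ)) 0 rfl
  have hconj := eventually_differentiableAt_conjMap hH.differentiableAt
  have hmem : ∀ {K : (Fin n → ℂ) × ℂ → (Fin n → ℂ) × ℂ}, ContinuousAt K 0 → K 0 = 0 →
      ∀ᶠ x in 𝓝 0, (K x).1 ∈ prodBalls β₂ := fun hK hK0 =>
    eventually_mem_prodBalls (continuous_fst.continuousAt.comp hK)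
      (by simpa [hK0] using zero_mem_prodBalls β₂)
  filter_upwards [hfst.eventually hH.differentiableAt, hsnd.eventually hconj,
    hfst.eventually (eventually_differentiableAt_fderiv hH.differentiableAt),
    hfst.eventually (hmem hH.continuousAt h0),
    hsnd.eventually (hmem hconj.self_of_nhds.continuousAt (conjMap_zero h0))]
    with P hd hdconj hd' hm hmconj
  have hvert : DifferentiableAt ℂ
      (fun P : ((Fin n → ℂ) × ℂ) × ((Fin n → ℂ) × ℂ) => fderiv ℂ H P.1 (0, 1)) P :=
    (hd'.comp P differentiableAt_fst).clm_apply (differentiableAt_const _)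
  have hdpot := differentiableAt_dpot q (hd.comp P differentiableAt_fst).fst
    (hdconj.comp P differentiableAt_snd).fst hm hmconj
  exact hvert.snd.add (hdpot.clm_apply hvert.fst)

omit hH in
lemma segreScale_zero_left (w : (Fin n → ℂ) × ℂ) :
    segreScale β₂ q H (0, w) = fibreScale H + metricForm β₂ q (baseDrift H) (conjMap H w).1 := by
  rw [segreScale, h0, Prod.fst_zero, dpot_zero_left, metricForm_comm]
  rfl

lemma eventually_fibreScale_recenter_ne_zero (hscale : fibreScale H ≠ 0) :
    ∀ᶠ x in 𝓝 0, IsRealPt β₁ p x → fibreScale (recenter β₁ p β₂ q H x) ≠ 0 := by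
  have hcont := (hH.eventually_differentiableAt_segreScale h0).self_of_nhds.continuousAt
  have hne : segreScale β₂ q H 0 ≠ 0 := by
    rw [Prod.zero_eq_mk, segreScale_zero_left h0, conjMap_zero h0]
    simpa using hscale
  have hdiag : Tendsto (fun x : (Fin n → ℂ) × ℂ => (x, star x)) (𝓝 0) (𝓝 0) :=
    Continuous.tendsto' (by fun_prop) _ _ (by simp)
  filter_upwards [hH.eventually_isCircleMapAt, hdiag.eventually (hcont.eventually_ne hne)]
    with x hx hxne hreal
  rwa [(hx hreal).fibreScale_recenter]

variable [NeZero n] (hβ₁ : Function.Surjective β₁) (hβ₂ : Function.Surjective β₂)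
  (hp : ∀ i, 0 < p i) (hq : ∀ j, 0 < q j) (hrank : 2 ≤ l ∨ 2 ≤ l') (hscale : fibreScale H ≠ 0)
include hβ₁ hβ₂ hp hq hrank hscale

lemma eventually_fibreScale_recenter_eq :
    ∀ᶠ x in 𝓝 0, IsRealPt β₁ p x → fibreScale (recenter β₁ p β₂ q H x) = fibreScale H := by
  filter_upwards [hH.eventually_isCircleMapAt, hH.eventually_fibreScale_recenter_ne_zero h0 hscale]
    with x hx hne hreal
  have hN := (hx hreal).isCircleMapAt_recenter
  have hN0 := (hx hreal).recenter_zero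
  have hre := (hN.symbolMap_baseDeriv hN0 hp hq (hne hreal)).scale_unique hβ₁ hβ₂ hp hq hrank
    (hH.symbolMap_baseDeriv h0 hp hq hscale)
  obtain ⟨r, -, hr⟩ := hH.exists_fibreScale_eq h0 hp
  obtain ⟨r', -, hr'⟩ := hN.exists_fibreScale_eq hN0 hp
  rw [hr, hr', ofReal_re, ofReal_re] at hre
  rw [hr, hr', hre]

lemma baseDrift_eq_zero : baseDrift H = 0 := by
  have hpolar : ∀ᶠ P in 𝓝 0, OnSegre β₁ p P → segreScale β₂ q H P - fibreScale H = 0 := by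
    refine eventually_onSegre_imp ?_ ?_
    · filter_upwards [hH.eventually_differentiableAt_segreScale h0] with P hP using hP.sub_const _
    · filter_upwards [hH.eventually_isCircleMapAt,
        hH.eventually_fibreScale_recenter_eq h0 hβ₁ hβ₂ hp hq hrank hscale] with x hx heq hreal
      rw [← (hx hreal).fibreScale_recenter, heq hreal, sub_self]
  have hlift : Tendsto (fun w : Fin n → ℂ => ((0 : (Fin n → ℂ) × ℂ), (w, (0 : ℂ)))) (𝓝 0) (𝓝 0) :=
    Continuous.tendsto' (by fun_prop) _ _ rfl
  obtain ⟨v, hv⟩ := hH.baseDeriv_surjective h0 hp hscale (baseDrift H)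
  have hform : ∀ᶠ w in 𝓝 0, metricForm β₁ p v w = 0 := by
    filter_upwards [hlift.eventually hpolar, hH.metricForm_conjMap h0] with w hw hconj
    have hdrift : metricForm β₂ q (baseDrift H) (conjMap H (w, 0)).1 = 0 := by
      simpa [segreScale_zero_left h0] using hw (by simp [OnSegre])
    have hvw := hconj v
    rw [hv, map_sub, map_smul, sub_apply, smul_apply, hdrift, smul_zero, sub_zero, zero_eq_mul]
      at hvw
    exact hvw.resolve_left hscale
  have hzero : metricForm β₁ p v = 0 :=
    (metricForm β₁ p v).hasFDerivAt.unique ((hasFDerivAt_const 0 0).congr_of_eventuallyEq hform)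
  have hv0 : v = 0 := eq_of_forall_metricForm_eq (β := β₁) hp fun w => by rw [hzero, map_zero]
  rw [← hv, hv0, map_zero]

lemma eventually_fderiv_vertical : ∀ᶠ x in 𝓝 0, fderiv ℂ H x (0, 1) = (0, fibreScale H) := by
  have hreal : ∀ᶠ x in 𝓝 0, IsRealPt β₁ p x → fderiv ℂ H x (0, 1) - (0, fibreScale H) = 0 := by
    filter_upwards [hH.eventually_isCircleMapAt,
      hH.eventually_fibreScale_recenter_eq h0 hβ₁ hβ₂ hp hq hrank hscale] with x hx heq hreal
    have hN := (hx hreal).isCircleMapAt_recenter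
    rw [(hx hreal).fderiv_vertical (hN.baseDrift_eq_zero (hx hreal).recenter_zero hβ₁ hβ₂ hp hq
      hrank (by rwa [heq hreal])), heq hreal, sub_self]
  have hd := (eventually_differentiableAt_fderiv hH.differentiableAt).mono fun x hx =>
    (hx.clm_apply (differentiableAt_const ((0, 1) : (Fin n → ℂ) × ℂ))).sub_const (0, fibreScale H)
  exact (eventually_eq_zero_of_isRealPt hd hreal).mono fun x hx => sub_eq_zero.1 hx

lemma eventually_eq_add_smul :
    ∀ᶠ x in 𝓝 0, H x = H (x.1, 0) + x.2 • (0, fibreScale H) := by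
  have hd : ∀ᶠ x in 𝓝 0, HasFDerivAt (fun x => H x - x.2 • ((0, fibreScale H) : (Fin n → ℂ) × ℂ))
      (fderiv ℂ H x - (ContinuousLinearMap.snd ℂ (Fin n → ℂ) ℂ).smulRight (0, fibreScale H)) x :=
    hH.differentiableAt.mono fun x hx => hx.hasFDerivAt.sub
      ((ContinuousLinearMap.snd ℂ (Fin n → ℂ) ℂ).smulRight (0, fibreScale H)).hasFDerivAt
  filter_upwards [eventually_eq_of_fderiv_comp_inr_eq_zero (hd.mono fun x hx => hx.differentiableAt)
    (by
      filter_upwards [hd, hH.eventually_fderiv_vertical h0 hβ₁ hβ₂ hp hq hrank hscale] with x hx hv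
      rw [hx.fderiv]
      ext1
      simp [hv])] with x hx
  rw [Prod.snd_zero, zero_smul, sub_zero] at hx
  exact sub_eq_iff_eq_add.1 hx

lemma eventually_conjMap_fst_eq :
    ∀ᶠ w in 𝓝 0, (conjMap H (w, 0)).1 = star (baseDeriv H (star w)) := by
  have hdrift := hH.baseDrift_eq_zero h0 hβ₁ hβ₂ hp hq hrank hscale
  filter_upwards [hH.metricForm_conjMap h0] with w hw
  refine eq_of_forall_metricForm_eq (β := β₂) hq fun u => ?_
  obtain ⟨v, rfl⟩ := hH.baseDeriv_surjective h0 hp hscale u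
  rw [metricForm_comm, metricForm_comm β₂ q (star _), hH.metricForm_baseDeriv h0]
  simpa [hdrift] using hw v

lemma eventually_eq_linear :
    ∀ᶠ x in 𝓝 0, H x = (baseDeriv H x.1, fibreScale H * x.2) := by
  have hfst := continuous_fst.tendsto' (0 : (Fin n → ℂ) × ℂ) 0 rfl
  have hstar := (continuous_star.tendsto' (0 : Fin n → ℂ) 0 (star_zero _)).comp hfst
  filter_upwards [hH.eventually_eq_add_smul h0 hβ₁ hβ₂ hp hq hrank hscale,
    hfst.eventually (hH.eventually_snd_eq_zero h0),
    hstar.eventually (hH.eventually_conjMap_fst_eq h0 hβ₁ hβ₂ hp hq hrank hscale)]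
    with x hx hsnd hbase
  have hbase' : (H (x.1, 0)).1 = baseDeriv H x.1 :=
    star_injective (by simpa [conjMap, Prod.star_def] using hbase)
  rw [hx]
  exact Prod.ext (by simp [hbase']) (by simp [hsnd, mul_comm])

lemma eventually_pot_baseDeriv : ∀ᶠ P : (Fin n → ℂ) × (Fin n → ℂ) in 𝓝 0,
    pot β₂ q (baseDeriv H P.1) (star (baseDeriv H (star P.2))) =
      fibreScale H * pot β₁ p P.1 P.2 := by
  have hpot : ContinuousAt (fun P : (Fin n → ℂ) × (Fin n → ℂ) => pot β₁ p P.1 P.2) 0 :=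
    (hasFDerivAt_pot p (zero_mem_prodBalls β₁) (zero_mem_prodBalls β₁)).continuousAt
  have hlift : Tendsto (fun P : (Fin n → ℂ) × (Fin n → ℂ) => (P.1, -pot β₁ p P.1 P.2))
      (𝓝 0) (𝓝 0) := by
    have hcont : ContinuousAt
        (fun P : (Fin n → ℂ) × (Fin n → ℂ) => (P.1, -pot β₁ p P.1 P.2)) 0 := by fun_prop
    simpa [ContinuousAt] using! hcont
  filter_upwards [hH.eventually_pot_map h0,
    hlift.eventually (hH.eventually_eq_linear h0 hβ₁ hβ₂ hp hq hrank hscale),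
    (continuous_snd.tendsto' (0 : (Fin n → ℂ) × (Fin n → ℂ)) 0 rfl).eventually
      (hH.eventually_conjMap_fst_eq h0 hβ₁ hβ₂ hp hq hrank hscale)] with P hP hlin hconj
  rw [hlin, hconj] at hP
  linear_combination hP

end IsCircleMapAt
end Nondegenerate

section Degenerate
variable {n l : ℕ} {β : Fin n → Fin l} {p : Fin l → ℕ} {H : Type*} [NormedAddCommGroup H]
  [NormedSpace ℂ H] [FiniteDimensional ℂ H] {k : (Fin n → ℂ) × ℂ → H}

lemma eventually_fderiv_onSegre_eq_zero_of_tangent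
    (hk : ∀ᶠ x in 𝓝 0, DifferentiableAt ℂ k x)
    (h0 : ∀ᶠ x in 𝓝 0, IsRealPt β p x → ∀ v, fderiv ℂ k x (v, -dpot β p x.1 (star x.1) v) = 0) :
    ∀ᶠ P in 𝓝 0, OnSegre β p P → ∀ v, fderiv ℂ k P.1 (v, -dpot β p P.1.1 P.2.1 v) = 0 := by
  have hfst := continuous_fst.tendsto' (0 : ((Fin n → ℂ) × ℂ) × ((Fin n → ℂ) × ℂ)) 0 rfl
  have hsnd := continuous_snd.tendsto' (0 : ((Fin n → ℂ) × ℂ) × ((Fin n → ℂ) × ℂ)) 0 rfl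
  have hmem : ∀ᶠ x : (Fin n → ℂ) × ℂ in 𝓝 0, x.1 ∈ prodBalls β :=
    eventually_mem_prodBalls continuousAt_fst (zero_mem_prodBalls β)
  have hd : ∀ᶠ P in 𝓝 0, DifferentiableAt ℂ (fun P : ((Fin n → ℂ) × ℂ) × ((Fin n → ℂ) × ℂ) =>
      fderiv ℂ k P.1 ∘L (.inl ℂ _ _ - .inr ℂ _ _ ∘L dpot β p P.1.1 P.2.1)) P := by
    filter_upwards [hfst.eventually (eventually_differentiableAt_fderiv hk),
      hfst.eventually hmem, hsnd.eventually hmem] with P hP hm hm'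
    have hdpot := differentiableAt_dpot p differentiableAt_fst.fst differentiableAt_snd.fst hm hm'
    exact (hP.comp P differentiableAt_fst).clm_comp
      (((differentiableAt_const _).clm_comp hdpot).const_sub _)
  have hpolar := eventually_onSegre_imp hd (h0.mono fun x hx hreal =>
    ContinuousLinearMap.ext fun v => by
      simpa [-ContinuousLinearMap.comp_sub, -map_sub] using hx hreal v)
  exact hpolar.mono fun P hP hseg v => by
    simpa [-ContinuousLinearMap.comp_sub, -map_sub] using DFunLike.congr_fun (hP hseg) v

-- At a fixed `x` the Segre variety `{y | OnSegre (x, y)}` surjects onto the base, so the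
-- tangent functionals `dpot x.1 w` are available for every small `w`.
lemma eventually_fderiv_tangent_eq_zero
    (hk : ∀ᶠ x in 𝓝 0, DifferentiableAt ℂ k x)
    (h0 : ∀ᶠ x in 𝓝 0, IsRealPt β p x → ∀ v, fderiv ℂ k x (v, -dpot β p x.1 (star x.1) v) = 0) :
    ∀ᶠ P : (Fin n → ℂ) × ((Fin n → ℂ) × ℂ) in 𝓝 0, ∀ v,
      fderiv ℂ k P.2 (v, -dpot β p P.2.1 P.1 v) = 0 := by
  have hpot : ContinuousAt
      (fun P : (Fin n → ℂ) × ((Fin n → ℂ) × ℂ) => pot β p P.2.1 P.1) 0 :=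
    (differentiableAt_pot (x := (0 : (Fin n → ℂ) × ((Fin n → ℂ) × ℂ))) p differentiableAt_snd.fst
      differentiableAt_fst (zero_mem_prodBalls β) (zero_mem_prodBalls β)).continuousAt
  have hlift : ContinuousAt (fun P : (Fin n → ℂ) × ((Fin n → ℂ) × ℂ) =>
      (P.2, (P.1, -P.2.2 - pot β p P.2.1 P.1))) 0 := by fun_prop
  have hlift0 : Tendsto (fun P : (Fin n → ℂ) × ((Fin n → ℂ) × ℂ) =>
      (P.2, (P.1, -P.2.2 - pot β p P.2.1 P.1))) (𝓝 0) (𝓝 0) := by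
    simpa [ContinuousAt] using! hlift
  exact (hlift0.eventually (eventually_fderiv_onSegre_eq_zero_of_tangent hk h0)).mono
    fun P hP => hP (by simp only [OnSegre]; ring)

lemma eventually_dpot_star_ne_zero (hp : ∀ i, 0 < p i) {w : Fin n → ℂ} (hw : w ∈ prodBalls β)
    (hw0 : w ≠ 0) : ∀ᶠ x : (Fin n → ℂ) × ℂ in 𝓝 0, dpot β p x.1 w (star w) ≠ 0 := by
  have hcont : ContinuousAt (fun x : (Fin n → ℂ) × ℂ => dpot β p x.1 w (star w)) 0 :=
    ((differentiableAt_dpot (x := (0 : (Fin n → ℂ) × ℂ)) p differentiableAt_fst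
      (differentiableAt_const w) (zero_mem_prodBalls β) hw).clm_apply
        (differentiableAt_const _)).continuousAt
  refine hcont.eventually_ne ?_
  rw [Prod.fst_zero, dpot_zero_left, metricForm_self_star]
  exact ofReal_ne_zero.2 fun h => hw0 (eq_zero_of_metricSq_eq_zero hp h)

-- The functional for `w = 0` kills the base directions, any other one then the fibre direction.
lemma eventually_fderiv_eq_zero_of_tangent [NeZero n] (hp : ∀ i, 0 < p i)
    (hk : ∀ᶠ x in 𝓝 0, DifferentiableAt ℂ k x)
    (h0 : ∀ᶠ x in 𝓝 0, IsRealPt β p x → ∀ v, fderiv ℂ k x (v, -dpot β p x.1 (star x.1) v) = 0) :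
    ∀ᶠ x in 𝓝 0, fderiv ℂ k x = 0 := by
  have htangent := (eventually_fderiv_tangent_eq_zero hk h0).curry_nhds
  have hbase : ∀ᶠ x in 𝓝 0, ∀ v, fderiv ℂ k x (v, 0) = 0 := by
    simpa using htangent.self_of_nhds
  obtain ⟨w, ⟨hw, hmem⟩, hw0⟩ :=
    ((htangent.and ((isOpen_prodBalls β).mem_nhds (zero_mem_prodBalls β))).filter_mono
      nhdsWithin_le_nhds |>.and (self_mem_nhdsWithin (s := {0}ᶜ))).exists
  filter_upwards [hw, hbase, eventually_dpot_star_ne_zero hp hmem hw0] with x hxw hx hne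
  have hvert : fderiv ℂ k x (0, 1) = 0 := by
    have hsplit : (star w, -dpot β p x.1 w (star w)) =
        (star w, (0 : ℂ)) - dpot β p x.1 w (star w) • (0, 1) := by simp
    have htan := hxw (star w)
    rw [hsplit, map_sub, map_smul, hx, zero_sub, neg_eq_zero] at htan
    exact (smul_eq_zero.1 htan).resolve_left hne
  ext v
  · simpa using hx v
  · simpa using hvert

end Degenerate

section PowerSums
variable {ι κ : Type*} [Fintype ι] [Fintype κ]

lemma hasFPowerSeriesAt_neg_sum_mul_log (c a : ι → ℂ) :
    HasFPowerSeriesAt (fun u => -∑ i, c i * log (1 - u * a i))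
      (.ofScalars ℂ fun k => (∑ i, c i * a i ^ k) / k) 0 := by
  have hsmall : ∀ i, ∀ᶠ u : ℂ in 𝓝 0, ‖u * a i‖ < 1 := fun i =>
    (Continuous.tendsto' (by fun_prop) (0 : ℂ) 0 (by simp)).eventually_lt_const one_pos
  rw [hasFPowerSeriesAt_iff]
  filter_upwards [eventually_all.2 hsmall] with u hu
  have hsum := hasSum_sum (s := Finset.univ) fun i _ =>
    (hasSum_taylorSeries_neg_log (hu i)).mul_left (c i)
  simp only [mul_neg, Finset.sum_neg_distrib] at hsum
  rw [zero_add]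
  refine hsum.congr_fun fun k => ?_
  rw [FormalMultilinearSeries.coeff_ofScalars, smul_eq_mul, Finset.sum_div, Finset.mul_sum]
  exact Finset.sum_congr rfl fun i _ => by rw [mul_pow]; ring

lemma sum_mul_pow_eq_of_eventually_sum_mul_log_eq {c a : ι → ℂ} {d b : κ → ℂ}
    (h : ∀ᶠ u in 𝓝 0, -∑ j, d j * log (1 - u * b j) = -∑ i, c i * log (1 - u * a i))
    {k : ℕ} (hk : k ≠ 0) : ∑ j, d j * b j ^ k = ∑ i, c i * a i ^ k := by
  have hcoeff := congr_fun (FormalMultilinearSeries.ofScalars_series_injective ℂ ℂ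
    ((hasFPowerSeriesAt_neg_sum_mul_log d b).eq_formalMultilinearSeries_of_eventually
      (hasFPowerSeriesAt_neg_sum_mul_log c a) h)) k
  exact (div_left_inj' (Nat.cast_ne_zero.2 hk)).1 hcoeff

lemma tendsto_sum_mul_pow_zero {c a : ι → ℝ} (ha : ∀ i, 0 ≤ a i) (ha1 : ∀ i, a i < 1) :
    Tendsto (fun k : ℕ => ∑ i, c i * a i ^ k) atTop (𝓝 0) := by
  have hlim := tendsto_finsetSum Finset.univ fun i _ =>
    (tendsto_pow_atTop_nhds_zero_of_lt_one (ha i) (ha1 i)).const_mul (c i)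
  simpa only [mul_zero, Finset.sum_const_zero] using hlim

lemma mul_pow_le_sum_mul_pow {c a : ι → ℝ} (hc : ∀ i, 0 ≤ c i) (ha : ∀ i, 0 ≤ a i) (i : ι)
    (k : ℕ) : c i * a i ^ k ≤ ∑ i, c i * a i ^ k :=
  Finset.single_le_sum (f := fun i => c i * a i ^ k)
    (fun i _ => mul_nonneg (hc i) (pow_nonneg (ha i) k)) (Finset.mem_univ i)

lemma lt_one_of_tendsto_sum_mul_pow_zero {c a : ι → ℝ} (hc : ∀ i, 0 < c i) (ha : ∀ i, 0 ≤ a i)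
    (h : Tendsto (fun k : ℕ => ∑ i, c i * a i ^ k) atTop (𝓝 0)) (i : ι) : a i < 1 := by
  have hterm : Tendsto (fun k : ℕ => c i * a i ^ k) atTop (𝓝 0) :=
    squeeze_zero (fun k => mul_nonneg (hc i).le (pow_nonneg (ha i) k))
      (mul_pow_le_sum_mul_pow (fun i => (hc i).le) ha i) h
  have hpow := hterm.const_mul (c i)⁻¹
  simp only [inv_mul_cancel_left₀ (hc i).ne', mul_zero] at hpow
  exact (le_abs_self _).trans_lt (tendsto_pow_atTop_nhds_zero_iff.1 hpow)

lemma one_le_of_sum_mul_pow_eq {c a : ι → ℝ} {r : ℝ} (hc : ∀ i, 1 ≤ c i) (ha : ∀ i, 0 ≤ a i)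
    (hr : r ≠ 0) (h : ∀ k : ℕ, k ≠ 0 → ∑ i, c i * a i ^ k = r) : 1 ≤ r := by
  obtain ⟨i, hi⟩ : ∃ i, 1 ≤ a i := by
    by_contra! ha1
    have hconst : Tendsto (fun k : ℕ => ∑ i, c i * a i ^ k) atTop (𝓝 r) :=
      tendsto_const_nhds.congr' ((eventually_ne_atTop 0).mono fun k hk => (h k hk).symm)
    exact hr (tendsto_nhds_unique hconst (tendsto_sum_mul_pow_zero ha ha1))
  calc 1 ≤ c i * a i ^ 1 := one_le_mul_of_one_le_of_one_le (hc i) (one_le_pow₀ hi)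
    _ ≤ ∑ i, c i * a i ^ 1 := mul_pow_le_sum_mul_pow (fun i => zero_le_one.trans (hc i)) ha i 1
    _ = r := h 1 one_ne_zero

lemma hasSum_neg_log_prod_one_sub {c : ι → ℕ} {a : ι → ℝ} (ha : ∀ i, |a i| < 1) :
    HasSum (fun k : ℕ => (∑ i, (c i : ℝ) * a i ^ (k + 1)) / (k + 1))
      (-Real.log (∏ i, (1 - a i) ^ c i)) := by
  have hsum := hasSum_sum (s := Finset.univ) fun i _ =>
    (Real.hasSum_pow_div_log_of_abs_lt_one (ha i)).mul_left (c i : ℝ)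
  rw [Real.log_prod fun i _ => (pow_pos (sub_pos.2 (lt_of_abs_lt (ha i))) _).ne',
    ← Finset.sum_neg_distrib]
  simp only [Real.log_pow, ← mul_neg]
  refine hsum.congr_fun fun k => ?_
  simp only [Finset.sum_div, mul_div_assoc]

lemma prod_one_sub_pow_eq_of_sum_mul_pow_eq {c : ι → ℕ} {a : ι → ℝ} {d : κ → ℕ} {b : κ → ℝ}
    (ha : ∀ i, |a i| < 1) (hb : ∀ j, |b j| < 1)
    (h : ∀ k : ℕ, k ≠ 0 → ∑ j, (d j : ℝ) * b j ^ k = ∑ i, (c i : ℝ) * a i ^ k) :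
    ∏ j, (1 - b j) ^ d j = ∏ i, (1 - a i) ^ c i := by
  have hlog := hasSum_neg_log_prod_one_sub (c := d) hb
  simp only [h _ (Nat.succ_ne_zero _)] at hlog
  exact Real.log_injOn_pos
    (Finset.prod_pos fun j _ => pow_pos (sub_pos.2 (lt_of_abs_lt (hb j))) _)
    (Finset.prod_pos fun i _ => pow_pos (sub_pos.2 (lt_of_abs_lt (ha i))) _)
    (neg_injective (hlog.unique (hasSum_neg_log_prod_one_sub ha)))

end PowerSums

section ScalesPowerSums
variable {n l l' : ℕ} {β₁ : Fin n → Fin l} {p : Fin l → ℕ} {β₂ : Fin n → Fin l'} {q : Fin l' → ℕ}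
  {f g : (Fin n → ℂ) → Fin n → ℂ} {r : ℝ}

variable (β₁ p β₂ q f r) in
/-- `f` multiplies by `r` every power sum of the squared block norms, weighted by the exponents of
the generic norms. These power sums are the Taylor coefficients of the potential along a complex
line through the origin. -/
def ScalesPowerSums : Prop :=
  ∀ z (k : ℕ), k ≠ 0 →
    ∑ j, (q j : ℝ) * blockSq β₂ j (f z) ^ k = r * ∑ i, (p i : ℝ) * blockSq β₁ i z ^ k

lemma abs_blockSq_lt_one {β : Fin n → Fin l} {z : Fin n → ℂ} (hz : z ∈ prodBalls β) (i : Fin l) :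
    |blockSq β i z| < 1 := by
  rw [abs_of_nonneg (blockSq_nonneg β i z)]
  exact hz i

lemma blockSq_single (β : Fin n → Fin l) (a : Fin n) (i : Fin l) :
    blockSq β i (Pi.single a 1) = if i = β a then 1 else 0 := by
  simp [blockSq, Pi.single_apply, apply_ite normSq, eq_comm]

lemma scalesPowerSums_of_pot_eq {A : (Fin n → ℂ) →L[ℂ] (Fin n → ℂ)}
    (h : ∀ᶠ P : (Fin n → ℂ) × (Fin n → ℂ) in 𝓝 0,
      pot β₂ q (A P.1) (star (A (star P.2))) = r * pot β₁ p P.1 P.2) :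
    ScalesPowerSums β₁ p β₂ q A r := by
  intro z k hk
  have hsqrt : Tendsto (fun u : ℂ => u ^ (2⁻¹ : ℂ)) (𝓝 0) (𝓝 0) := by
    have hcont : ContinuousAt (fun u : ℂ => u ^ (2⁻¹ : ℂ)) 0 :=
      continuousAt_cpow_const_of_re_pos (Or.inl le_rfl) (by norm_num)
    simpa [ContinuousAt] using! hcont
  have hline : Tendsto (fun t : ℂ => (t • z, t • star z)) (𝓝 0) (𝓝 0) :=
    Continuous.tendsto' (by fun_prop) _ _ (by simp)
  have hlog : ∀ᶠ u : ℂ in 𝓝 0, -∑ j, (q j : ℂ) * log (1 - u * blockSq β₂ j (A z)) =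
      -∑ i, (r * p i : ℂ) * log (1 - u * blockSq β₁ i z) := by
    filter_upwards [(hline.comp hsqrt).eventually h] with u hu
    have hu2 : u ^ (2⁻¹ : ℂ) * u ^ (2⁻¹ : ℂ) = u := by rw [← sq, cpow_ofNat_inv_pow]
    simpa [pot, star_smul, blockDot_self_star, ← mul_assoc, hu2, Finset.mul_sum] using hu
  have hsum := sum_mul_pow_eq_of_eventually_sum_mul_log_eq hlog hk
  rw [Finset.mul_sum]
  simp only [← mul_assoc]
  exact_mod_cast hsum

namespace ScalesPowerSums

lemma of_rightInverse (hf : ScalesPowerSums β₁ p β₂ q f r) (hr : r ≠ 0)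
    (hg : Function.RightInverse g f) : ScalesPowerSums β₂ q β₁ p g r⁻¹ := fun w k hk => by
  rw [← hg w, hf _ k hk, hg w, inv_mul_cancel_left₀ hr]

variable (hf : ScalesPowerSums β₁ p β₂ q f r)
include hf

lemma mapsTo_prodBalls (hq : ∀ j, 0 < q j) :
    Set.MapsTo f (prodBalls β₁) (prodBalls β₂) := fun z hz =>
  lt_one_of_tendsto_sum_mul_pow_zero (fun j => Nat.cast_pos.2 (hq j))
    (fun j => blockSq_nonneg β₂ j (f z)) <| by
      have hlim := (tendsto_sum_mul_pow_zero (c := fun i => (p i : ℝ))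
        (fun i => blockSq_nonneg β₁ i z) hz).const_mul r
      rw [mul_zero] at hlim
      exact hlim.congr' ((eventually_ne_atTop 0).mono fun k hk => (hf z k hk).symm)

lemma one_le_scale (hβ₁ : Function.Surjective β₁) (hq : ∀ j, 0 < q j) (hr : r ≠ 0)
    (hp1 : ∃ i, p i = 1) : 1 ≤ r := by
  obtain ⟨i, hi⟩ := hp1
  obtain ⟨a, rfl⟩ := hβ₁ i
  refine one_le_of_sum_mul_pow_eq (fun j => Nat.one_le_cast.2 (hq j))
    (fun j => blockSq_nonneg β₂ j (f (Pi.single a 1))) hr fun k hk => ?_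
  rw [hf _ k hk]
  simp [blockSq_single, ite_pow, hk, hi]

lemma scale_eq_one {g : (Fin n → ℂ) → Fin n → ℂ} (hg : Function.RightInverse g f)
    (hβ₁ : Function.Surjective β₁) (hβ₂ : Function.Surjective β₂) (hp : ∀ i, 0 < p i)
    (hp1 : ∃ i, p i = 1) (hq : ∀ j, 0 < q j) (hq1 : ∃ j, q j = 1) (hr : r ≠ 0) : r = 1 := by
  have hle := hf.one_le_scale hβ₁ hq hr hp1
  exact le_antisymm ((one_le_inv₀ (one_pos.trans_le hle)).1
    ((hf.of_rightInverse hr hg).one_le_scale hβ₂ hp (inv_ne_zero hr) hq1)) hle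

end ScalesPowerSums

lemma ScalesPowerSums.gnorm_eq (hf : ScalesPowerSums β₁ p β₂ q f 1) {z : Fin n → ℂ}
    (hz : z ∈ prodBalls β₁) (hfz : f z ∈ prodBalls β₂) : gnorm β₂ q (f z) = gnorm β₁ p z :=
  prod_one_sub_pow_eq_of_sum_mul_pow_eq (abs_blockSq_lt_one hz) (abs_blockSq_lt_one hfz)
    fun k hk => by rw [hf z k hk, one_mul]

end ScalesPowerSums

section BundleIso
variable {n l l' l'' : ℕ} {β₁ : Fin n → Fin l} {p : Fin l → ℕ} {β₂ : Fin n → Fin l'}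
  {q : Fin l' → ℕ}
  {β₃ : Fin n → Fin l''} {s : Fin l'' → ℕ}

lemma Biholo.comp {E F G : Type*} [NormedAddCommGroup E] [NormedSpace ℂ E]
    [NormedAddCommGroup F] [NormedSpace ℂ F] [NormedAddCommGroup G] [NormedSpace ℂ G]
    {f : E → F} {g : F → G} {s : Set E} {t : Set F} {u : Set G}
    (hg : Biholo g t u) (hf : Biholo f s t) : Biholo (g ∘ f) s u := by
  obtain ⟨hgd, hgm, g', hgd', hgm', hgl, hgr⟩ := hg
  obtain ⟨hfd, hfm, f', hfd', hfm', hfl, hfr⟩ := hf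
  exact ⟨hgd.comp hfd hfm, hgm.comp hfm, f' ∘ g', hfd'.comp hgd' hgm', hfm'.comp hgm',
    hfl.comp hgl hfm, hfr.comp hgr hgm'⟩

/-- `(z, ξ) ↦ (ψ z, ξ * φ z)` is a norm-preserving holomorphic isomorphism between the Hermitian
line bundles over the two products of balls. -/
structure IsBundleIso (β₁ : Fin n → Fin l) (p : Fin l → ℕ) (β₂ : Fin n → Fin l') (q : Fin l' → ℕ)
    (ψ : (Fin n → ℂ) → Fin n → ℂ) (φ : (Fin n → ℂ) → ℂ) : Prop where
  biholo : Biholo ψ (prodBalls β₁) (prodBalls β₂)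
  differentiableOn : DifferentiableOn ℂ φ (prodBalls β₁)
  ne_zero : ∀ z ∈ prodBalls β₁, φ z ≠ 0
  gnorm_eq : ∀ z ∈ prodBalls β₁, gnorm β₂ q (ψ z) = normSq (φ z) * gnorm β₁ p z

namespace IsBundleIso

lemma comp {ψ ψ' : (Fin n → ℂ) → Fin n → ℂ} {φ φ' : (Fin n → ℂ) → ℂ}
    (h' : IsBundleIso β₂ q β₃ s ψ' φ') (h : IsBundleIso β₁ p β₂ q ψ φ) :
    IsBundleIso β₁ p β₃ s (ψ' ∘ ψ) (fun z => φ z * φ' (ψ z)) where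
  biholo := h'.biholo.comp h.biholo
  differentiableOn := h.differentiableOn.mul (h'.differentiableOn.comp h.biholo.1 h.biholo.2.1)
  ne_zero z hz := mul_ne_zero (h.ne_zero z hz) (h'.ne_zero _ (h.biholo.2.1 hz))
  gnorm_eq z hz := by
    rw [Function.comp_apply, h'.gnorm_eq _ (h.biholo.2.1 hz), h.gnorm_eq z hz, map_mul]
    ring

lemma mobius {β : Fin n → Fin l} {a : Fin n → ℂ} (ha : a ∈ prodBalls β) {c : ℂ}
    (hc : IsRealPt β p (a, c)) :
    IsBundleIso β p β p (mobius β a) (fun z => exp (c + pot β p z (star a))) where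
  biholo := biholo_mobius ha
  differentiableOn z hz := ((differentiableAt_pot p differentiableAt_id (differentiableAt_const _)
    hz (star_mem_prodBalls ha)).const_add c).cexp.differentiableWithinAt
  ne_zero _ _ := exp_ne_zero _
  gnorm_eq z hz := by
    have hca : normSq (exp c) = gnorm β p a := ((isRealPt_iff_fibreExp_mem_circBundle ha).1 hc).2
    rw [gnorm_mobius p ha hz, exp_add, map_mul, hca]
    ring

lemma linear {A : (Fin n → ℂ) ≃L[ℂ] (Fin n → ℂ)} (hA : ScalesPowerSums β₁ p β₂ q A 1)
    (hp : ∀ i, 0 < p i) (hq : ∀ j, 0 < q j) : IsBundleIso β₁ p β₂ q A (fun _ => 1) where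
  biholo := ⟨A.differentiable.differentiableOn, hA.mapsTo_prodBalls hq, A.symm,
    A.symm.differentiable.differentiableOn,
    (hA.of_rightInverse one_ne_zero A.apply_symm_apply).mapsTo_prodBalls hp,
    fun z _ => A.symm_apply_apply z, fun w _ => A.apply_symm_apply w⟩
  differentiableOn := differentiableOn_const _
  ne_zero _ _ := one_ne_zero
  gnorm_eq z hz := by rw [hA.gnorm_eq hz (hA.mapsTo_prodBalls hq hz), map_one, one_mul]

end IsBundleIso

/-- In the logarithmic fibre coordinates, `H` is near `x` the restriction of a norm-preserving
isomorphism of the line bundles. -/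
def LiftsBundleIso (β₁ : Fin n → Fin l) (p : Fin l → ℕ) (β₂ : Fin n → Fin l') (q : Fin l' → ℕ)
    (H : (Fin n → ℂ) × ℂ → (Fin n → ℂ) × ℂ) (x : (Fin n → ℂ) × ℂ) : Prop :=
  ∃ ψ φ, IsBundleIso β₁ p β₂ q ψ φ ∧
    ∀ᶠ y in 𝓝 x, y.1 ∈ prodBalls β₁ ∧ fibreExp (H y) = (ψ y.1, exp y.2 * φ y.1)

section LiftsBundleIso
variable {H K : (Fin n → ℂ) × ℂ → (Fin n → ℂ) × ℂ} {x : (Fin n → ℂ) × ℂ}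

lemma LiftsBundleIso.congr (h : LiftsBundleIso β₁ p β₂ q H x) (hK : K =ᶠ[𝓝 x] H) :
    LiftsBundleIso β₁ p β₂ q K x := by
  obtain ⟨ψ, φ, hiso, hlift⟩ := h
  refine ⟨ψ, φ, hiso, ?_⟩
  filter_upwards [hlift, hK] with y hy hKy using by rwa [hKy]

lemma LiftsBundleIso.comp (hK : LiftsBundleIso β₂ q β₃ s K (H x))
    (hH : LiftsBundleIso β₁ p β₂ q H x) (hcont : ContinuousAt H x) :
    LiftsBundleIso β₁ p β₃ s (K ∘ H) x := by
  obtain ⟨ψ', φ', hiso', hlift'⟩ := hK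
  obtain ⟨ψ, φ, hiso, hlift⟩ := hH
  refine ⟨_, _, hiso'.comp hiso, ?_⟩
  filter_upwards [hlift, hcont.eventually hlift'] with y ⟨hy, hHy⟩ ⟨_, hKy⟩
  obtain ⟨hfst, hsnd⟩ := Prod.mk.inj hHy
  rw [hfst, hsnd] at hKy
  exact ⟨hy, by rw [Function.comp_apply, hKy, Function.comp_apply, mul_assoc]⟩

lemma liftsBundleIso_logShift {β : Fin n → Fin l} {a : Fin n → ℂ} (ha : a ∈ prodBalls β) {c : ℂ}
    (hc : IsRealPt β p (a, c)) (hx : x.1 ∈ prodBalls β) :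
    LiftsBundleIso β p β p (logShift β p a c) x := by
  refine ⟨_, _, .mobius ha hc, ?_⟩
  filter_upwards [eventually_mem_prodBalls continuousAt_fst hx] with y hy
  exact ⟨hy, by rw [fibreExp, logShift, add_assoc, exp_add]⟩

end LiftsBundleIso

namespace IsCircleMapAt
variable {H : (Fin n → ℂ) × ℂ → (Fin n → ℂ) × ℂ}

lemma eventually_liftsBundleIso_of_recenter {x₀ : (Fin n → ℂ) × ℂ}
    (hH : IsCircleMapAt β₁ p β₂ q H x₀) : ∀ᶠ y in 𝓝 x₀,
      LiftsBundleIso β₁ p β₂ q (recenter β₁ p β₂ q H x₀) (logShift β₁ p x₀.1 (conj x₀.2) y) →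
        LiftsBundleIso β₁ p β₂ q H y := by
  have hlim := tendsto_logShift_conj hH.mem_source hH.isRealPt
  have hN := hH.isCircleMapAt_recenter
  have hmem : ∀ᶠ x in 𝓝 0, (recenter β₁ p β₂ q H x₀ x).1 ∈ prodBalls β₂ :=
    eventually_mem_prodBalls (continuous_fst.continuousAt.comp hN.continuousAt) hN.mem_target
  filter_upwards [hH.eventually_eq_recenter.eventually_nhds,
    eventually_mem_prodBalls continuousAt_fst hH.mem_source, hlim.eventually hmem,
    hlim.eventually hN.differentiableAt] with y heq hy hmemy hd hlift
  have hcont := (differentiableAt_logShift (p := p) hH.mem_source (conj x₀.2) hy).continuousAt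
  have hsource := liftsBundleIso_logShift hH.mem_source (isRealPt_star_snd hH.isRealPt) hy
  have htarget := liftsBundleIso_logShift hH.mem_target hH.isRealPt_map hmemy
  have hbase := hlift.comp hsource hcont
  exact (htarget.comp (H := recenter β₁ p β₂ q H x₀ ∘ logShift β₁ p x₀.1 (conj x₀.2)) hbase
    (hd.continuousAt.comp hcont)).congr heq

section
variable [NeZero n] (hβ₁ : Function.Surjective β₁) (hβ₂ : Function.Surjective β₂)
  (hp : ∀ i, 0 < p i) (hp1 : ∃ i, p i = 1) (hq : ∀ j, 0 < q j) (hq1 : ∃ j, q j = 1)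
  (hrank : 2 ≤ l ∨ 2 ≤ l')
include hβ₁ hβ₂ hp hp1 hq hq1 hrank

lemma liftsBundleIso_of_fibreScale_ne_zero (hH : IsCircleMapAt β₁ p β₂ q H 0) (h0 : H 0 = 0)
    (hscale : fibreScale H ≠ 0) : LiftsBundleIso β₁ p β₂ q H 0 := by
  obtain ⟨r, -, hr⟩ := hH.exists_fibreScale_eq h0 hp
  have hr0 : r ≠ 0 := by simpa [hr] using hscale
  have hsurj := hH.baseDeriv_surjective h0 hp hscale
  have hscales : ScalesPowerSums β₁ p β₂ q (baseDeriv H) r := scalesPowerSums_of_pot_eq <| by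
    simpa only [hr] using hH.eventually_pot_baseDeriv h0 hβ₁ hβ₂ hp hq hrank hscale
  obtain rfl := hscales.scale_eq_one (Function.rightInverse_surjInv hsurj) hβ₁ hβ₂ hp hp1 hq hq1 hr0
  obtain ⟨A, hA⟩ : ∃ A : (Fin n → ℂ) ≃L[ℂ] (Fin n → ℂ), ⇑A = baseDeriv H :=
    ⟨(LinearEquiv.ofBijective (baseDeriv H).toLinearMap
      ⟨LinearMap.injective_iff_surjective.2 hsurj, hsurj⟩).toContinuousLinearEquiv, rfl⟩
  rw [← hA] at hscales
  refine ⟨A, fun _ => 1, .linear hscales hp hq, ?_⟩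
  filter_upwards [eventually_mem_prodBalls continuousAt_fst hH.mem_source,
    hH.eventually_eq_linear h0 hβ₁ hβ₂ hp hq hrank hscale] with y hy hlin
  exact ⟨hy, by rw [fibreExp, hlin, hr, ofReal_one, one_mul, mul_one, hA]⟩

lemma eventually_eq_zero_or_frequently_liftsBundleIso (hH : IsCircleMapAt β₁ p β₂ q H 0)
    (h0 : H 0 = 0) :
    (∀ᶠ x in 𝓝 0, H x = 0) ∨ ∃ᶠ x in 𝓝 0, LiftsBundleIso β₁ p β₂ q H x := by
  by_cases hdeg : ∀ᶠ x in 𝓝 0, IsRealPt β₁ p x → fibreScale (recenter β₁ p β₂ q H x) = 0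
  · left
    have htangent : ∀ᶠ x in 𝓝 0, IsRealPt β₁ p x →
        ∀ v, fderiv ℂ H x (v, -dpot β₁ p x.1 (star x.1) v) = 0 := by
      filter_upwards [hH.eventually_isCircleMapAt, hdeg] with x hx hscale hreal
      exact (hx hreal).fderiv_tangent
        ((hx hreal).isCircleMapAt_recenter.baseDeriv_eq_zero (hx hreal).recenter_zero hq
          (hscale hreal))
    simpa only [h0] using eventually_eq_of_fderiv_eq_zero hH.differentiableAt
      (eventually_fderiv_eq_zero_of_tangent hp hH.differentiableAt htangent)
  · right
    refine ((not_eventually.1 hdeg).and_eventually hH.eventually_isCircleMapAt).mono ?_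
    rintro x ⟨hx, hcircle⟩
    obtain ⟨hreal, hscale⟩ := Classical.not_imp.1 hx
    have hHx := hcircle hreal
    refine hHx.eventually_liftsBundleIso_of_recenter.self_of_nhds ?_
    rw [logShift_conj_self hHx.mem_source hreal]
    exact hHx.isCircleMapAt_recenter.liftsBundleIso_of_fibreScale_ne_zero hβ₁ hβ₂ hp hp1 hq hq1
      hrank hHx.recenter_zero hscale

lemma eventually_eq_or_frequently_liftsBundleIso {x₀ : (Fin n → ℂ) × ℂ}
    (hH : IsCircleMapAt β₁ p β₂ q H x₀) :
    (∀ᶠ x in 𝓝 x₀, H x = H x₀) ∨ ∃ᶠ x in 𝓝 x₀, LiftsBundleIso β₁ p β₂ q H x := by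
  obtain hconst | hiso := hH.isCircleMapAt_recenter.eventually_eq_zero_or_frequently_liftsBundleIso
    hβ₁ hβ₂ hp hp1 hq hq1 hrank hH.recenter_zero
  · left
    filter_upwards [hH.eventually_eq_recenter,
      (tendsto_logShift_conj hH.mem_source hH.isRealPt).eventually hconst] with x hx hzero
    rw [hx, hzero, logShift_zero]
  · right
    have hlim := tendsto_logShift_zero β₁ p hH.mem_source
    refine hlim.frequently ((hiso.and_eventually ((hlim.eventually
      hH.eventually_liftsBundleIso_of_recenter).and (eventually_mem_prodBalls continuousAt_fst
        (zero_mem_prodBalls β₁)))).mono ?_)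
    rintro x ⟨hlift, htransport, hx⟩
    refine htransport ?_
    have hc : conj x₀.2 + x₀.2 + pot β₁ p x₀.1 (star x₀.1) = 0 := by
      rw [add_comm (conj x₀.2)]
      exact isRealPt_iff.1 hH.isRealPt
    rwa [logShift_logShift hH.mem_source hc hx]

end
end IsCircleMapAt
end BundleIso

section LogLift
variable {n l l' : ℕ} {β₁ : Fin n → Fin l} {p : Fin l → ℕ} {β₂ : Fin n → Fin l'} {q : Fin l' → ℕ}
  {F : (Fin n → ℂ) × ℂ → (Fin n → ℂ) × ℂ} {P₀ : (Fin n → ℂ) × ℂ}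

/-- The map `F` near `P₀` in the logarithmic fibre coordinates. Dividing by `(F P₀).2` keeps the
logarithm away from its branch cut. -/
def logLift (F : (Fin n → ℂ) × ℂ → (Fin n → ℂ) × ℂ) (P₀ x : (Fin n → ℂ) × ℂ) : (Fin n → ℂ) × ℂ :=
  ((F (fibreExp x)).1, log ((F (fibreExp x)).2 / (F P₀).2) + log (F P₀).2)

lemma snd_ne_zero_of_mem_circBundle {P : (Fin n → ℂ) × ℂ} (hP : P ∈ circBundle β₁ p) : P.2 ≠ 0 :=
  normSq_pos.1 (hP.2 ▸ gnorm_pos p hP.1)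

lemma fibreExp_log (hP₀ : P₀.2 ≠ 0) : fibreExp (P₀.1, log P₀.2) = P₀ := by
  rw [fibreExp, exp_log hP₀]

lemma tendsto_fibreExp (x : (Fin n → ℂ) × ℂ) : Tendsto fibreExp (𝓝 x) (𝓝 (fibreExp x)) := by
  unfold fibreExp
  exact Continuous.tendsto (by fun_prop) x

lemma isOpenMap_fibreExp : IsOpenMap (fibreExp (n := n)) :=
  IsOpenMap.id.prodMap isOpenMap_exp

lemma eventually_div_mem_slitPlane (hP₀ : P₀.2 ≠ 0) (hF : ContinuousAt F P₀) (hFP₀ : (F P₀).2 ≠ 0) :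
    ∀ᶠ x in 𝓝 (P₀.1, log P₀.2), (F (fibreExp x)).2 / (F P₀).2 ∈ slitPlane := by
  have hlim := tendsto_fibreExp (P₀.1, log P₀.2)
  rw [fibreExp_log hP₀] at hlim
  have hquot : Tendsto (fun x => (F (fibreExp x)).2 / (F P₀).2) (𝓝 (P₀.1, log P₀.2)) (𝓝 1) := by
    have hdiv := ((continuous_snd.continuousAt.comp hF).tendsto.comp hlim).div_const (F P₀).2
    rwa [Function.comp_apply, div_self hFP₀] at hdiv
  exact hquot.eventually (isOpen_slitPlane.mem_nhds one_mem_slitPlane)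

lemma eventually_fibreExp_logLift (hP₀ : P₀.2 ≠ 0) (hF : ContinuousAt F P₀)
    (hFP₀ : (F P₀).2 ≠ 0) :
    ∀ᶠ x in 𝓝 (P₀.1, log P₀.2), fibreExp (logLift F P₀ x) = F (fibreExp x) := by
  filter_upwards [eventually_div_mem_slitPlane hP₀ hF hFP₀] with x hx
  rw [fibreExp, logLift, exp_add, exp_log (slitPlane_ne_zero hx), exp_log hFP₀,
    div_mul_cancel₀ _ hFP₀]

lemma isCircleMapAt_logLift (hP₀ : P₀ ∈ circBundle β₁ p)
    (hF : ∀ᶠ P in 𝓝 P₀, DifferentiableAt ℂ F P)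
    (hmap : ∀ᶠ P in 𝓝 P₀, P ∈ circBundle β₁ p → F P ∈ circBundle β₂ q) :
    IsCircleMapAt β₁ p β₂ q (logLift F P₀) (P₀.1, log P₀.2) := by
  have hP₀ne := snd_ne_zero_of_mem_circBundle hP₀
  have hFP₀ := hmap.self_of_nhds hP₀
  have hFP₀ne := snd_ne_zero_of_mem_circBundle hFP₀
  have hcont := hF.self_of_nhds.continuousAt
  have hlim := tendsto_fibreExp (P₀.1, log P₀.2)
  rw [fibreExp_log hP₀ne] at hlim
  have hmem : ∀ᶠ P in 𝓝 P₀, (F P).1 ∈ prodBalls β₂ :=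
    eventually_mem_prodBalls (continuous_fst.continuousAt.comp hcont) hFP₀.1
  refine ⟨hP₀.1, ?_, ?_, ?_, ?_⟩
  · simpa only [logLift, fibreExp_log hP₀ne] using hFP₀.1
  · rwa [isRealPt_iff_fibreExp_mem_circBundle (x := (P₀.1, log P₀.2)) hP₀.1, fibreExp_log hP₀ne]
  · filter_upwards [hlim.eventually hF, eventually_div_mem_slitPlane hP₀ne hcont hFP₀ne]
      with x hx hslit
    have hFx : DifferentiableAt ℂ (fun x => F (fibreExp x)) x :=
      hx.comp x (by unfold fibreExp; fun_prop)
    have hquot : DifferentiableAt ℂ (fun x => (F (fibreExp x)).2 / (F P₀).2) x := by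
      simpa only [div_eq_mul_inv] using hFx.snd.mul_const (F P₀).2⁻¹
    exact hFx.fst.prodMk ((hquot.clog hslit).add_const _)
  · filter_upwards [hlim.eventually hmap, hlim.eventually hmem,
      eventually_mem_prodBalls continuousAt_fst hP₀.1,
      eventually_fibreExp_logLift hP₀ne hcont hFP₀ne] with x hx hFx hx₁ hexp hreal
    rw [isRealPt_iff_fibreExp_mem_circBundle hx₁] at hreal
    rw [isRealPt_iff_fibreExp_mem_circBundle (by exact hFx), hexp]
    exact hx hreal

lemma eventually_eq_of_eventually_logLift_eq (hP₀ : P₀.2 ≠ 0) (hF : ContinuousAt F P₀)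
    (hFP₀ : (F P₀).2 ≠ 0)
    (hconst : ∀ᶠ x in 𝓝 (P₀.1, log P₀.2), logLift F P₀ x = logLift F P₀ (P₀.1, log P₀.2)) :
    ∀ᶠ P in 𝓝 P₀, F P = F P₀ := by
  rw [← fibreExp_log hP₀]
  refine isOpenMap_fibreExp.nhds_le _ (eventually_map.2 ?_)
  have hexp := eventually_fibreExp_logLift hP₀ hF hFP₀
  filter_upwards [hconst, hexp] with x hx hFx
  rw [← hexp.self_of_nhds, ← hx, hFx]

lemma frequently_exists_isBundleIso_of_logLift (hP₀ : P₀.2 ≠ 0) (hF : ContinuousAt F P₀)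
    (hFP₀ : (F P₀).2 ≠ 0)
    (hiso : ∃ᶠ x in 𝓝 (P₀.1, log P₀.2), LiftsBundleIso β₁ p β₂ q (logLift F P₀) x) :
    ∃ᶠ P in 𝓝 P₀, ∃ ψ φ, IsBundleIso β₁ p β₂ q ψ φ ∧
      ∀ᶠ Q in 𝓝 P, F Q = (ψ Q.1, Q.2 * φ Q.1) := by
  rw [← fibreExp_log hP₀]
  refine (tendsto_fibreExp _).frequently ((hiso.and_eventually
    (eventually_fibreExp_logLift hP₀ hF hFP₀).eventually_nhds).mono ?_)
  rintro x ⟨⟨ψ, φ, h, hlift⟩, hexp⟩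
  refine ⟨ψ, φ, h, isOpenMap_fibreExp.nhds_le _ (eventually_map.2 ?_)⟩
  filter_upwards [hlift, hexp] with y hy hFy
  rw [← hFy, hy.2, fibreExp]

theorem eventually_eq_or_frequently_exists_isBundleIso [NeZero n] (hβ₁ : Function.Surjective β₁)
    (hβ₂ : Function.Surjective β₂) (hp : ∀ i, 0 < p i) (hp1 : ∃ i, p i = 1) (hq : ∀ j, 0 < q j)
    (hq1 : ∃ j, q j = 1) (hrank : 2 ≤ l ∨ 2 ≤ l') (hP₀ : P₀ ∈ circBundle β₁ p)
    (hF : ∀ᶠ P in 𝓝 P₀, DifferentiableAt ℂ F P)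
    (hmap : ∀ᶠ P in 𝓝 P₀, P ∈ circBundle β₁ p → F P ∈ circBundle β₂ q) :
    (∀ᶠ P in 𝓝 P₀, F P = F P₀) ∨
      ∃ᶠ P in 𝓝 P₀, ∃ ψ φ, IsBundleIso β₁ p β₂ q ψ φ ∧
        ∀ᶠ Q in 𝓝 P, F Q = (ψ Q.1, Q.2 * φ Q.1) := by
  have hcont := hF.self_of_nhds.continuousAt
  have hP₀ne := snd_ne_zero_of_mem_circBundle hP₀
  have hFP₀ne := snd_ne_zero_of_mem_circBundle (hmap.self_of_nhds hP₀)
  exact ((isCircleMapAt_logLift hP₀ hF hmap).eventually_eq_or_frequently_liftsBundleIso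
    hβ₁ hβ₂ hp hp1 hq hq1 hrank).imp
      (eventually_eq_of_eventually_logLift_eq hP₀ne hcont hFP₀ne)
      (frequently_exists_isBundleIso_of_logLift hP₀ne hcont hFP₀ne)

end LogLift

/-- Part (3) of the main theorem (with the form of the map as in Remark 1.3), for products
of balls: assuming one of the two domains has rank (number of factors) at least two, the
map coincides with a norm-preserving holomorphic isomorphism `(z,ξ) ↦ (ψ(z), ξφ(z))` of
the line bundles, where `ψ : Ω₁ → Ω₂` is a biholomorphism, `φ` is holomorphic and nowhere
zero on `Ω₁`, and `ρ₂(ψ(z)) = |φ(z)|² ρ₁(z)` on `Ω₁`. -/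
theorem main_theorem_part3 (n : ℕ) (hn : 1 ≤ n) (l l' : ℕ)
    (β₁ : Fin n → Fin l) (hβ₁ : Function.Surjective β₁)
    (β₂ : Fin n → Fin l') (hβ₂ : Function.Surjective β₂)
    (p : Fin l → ℕ) (hp : ∀ i, 0 < p i) (hp1 : ∃ i, p i = 1)
    (q : Fin l' → ℕ) (hq : ∀ j, 0 < q j) (hq1 : ∃ j, q j = 1)
    (hrank : 2 ≤ l ∨ 2 ≤ l')
    (U : Set ((Fin n → ℂ) × ℂ)) (hUopen : IsOpen U) (hUconn : IsConnected U)
    (hUS : (U ∩ circBundle β₁ p).Nonempty)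
    (F : ((Fin n → ℂ) × ℂ) → ((Fin n → ℂ) × ℂ))
    (hF : DifferentiableOn ℂ F U)
    (hFnc : ¬ ∃ c, Set.EqOn F (fun _ => c) U)
    (hFmap : Set.MapsTo F (U ∩ circBundle β₁ p) (circBundle β₂ q)) :
    ∃ (ψ : (Fin n → ℂ) → (Fin n → ℂ)) (φ : (Fin n → ℂ) → ℂ),
      Biholo ψ (prodBalls β₁) (prodBalls β₂) ∧
      DifferentiableOn ℂ φ (prodBalls β₁) ∧
      (∀ z ∈ prodBalls β₁, φ z ≠ 0) ∧
      (∀ z ∈ prodBalls β₁, gnorm β₂ q (ψ z) = Complex.normSq (φ z) * gnorm β₁ p z) ∧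
      ∃ V : Set ((Fin n → ℂ) × ℂ), IsOpen V ∧ V.Nonempty ∧ V ⊆ U ∧
        Set.EqOn F (fun P => (ψ P.1, P.2 * φ P.1)) V := by
  have : NeZero n := ⟨Nat.one_le_iff_ne_zero.1 hn⟩
  obtain ⟨P₀, hP₀U, hP₀⟩ := hUS
  have hU := hUopen.eventually_mem hP₀U
  have hd : ∀ᶠ P in 𝓝 P₀, DifferentiableAt ℂ F P :=
    hU.mono fun P hP => hF.differentiableAt (hUopen.mem_nhds hP)
  have hmap : ∀ᶠ P in 𝓝 P₀, P ∈ circBundle β₁ p → F P ∈ circBundle β₂ q :=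
    hU.mono fun P hPU hP => hFmap ⟨hPU, hP⟩
  obtain hconst | hiso := eventually_eq_or_frequently_exists_isBundleIso hβ₁ hβ₂ hp hp1 hq hq1
    hrank hP₀ hd hmap
  · exact absurd ⟨F P₀, eqOn_const_of_eventually_eq hUopen hUconn.isPreconnected hF hP₀U hconst⟩
      hFnc
  · obtain ⟨P, ⟨ψ, φ, h, hFP⟩, hPU⟩ := (hiso.and_eventually hU).exists
    obtain ⟨V, hV, hVopen, hPV⟩ := mem_nhds_iff.1 (hFP.and (hUopen.eventually_mem hPU))
    exact ⟨ψ, φ, h.biholo, h.differentiableOn, h.ne_zero, h.gnorm_eq, V, hVopen, ⟨P, hPV⟩,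
      fun Q hQ => (hV hQ).2, fun Q hQ => (hV hQ).1⟩
end
end

section
/- Let a, b ≥ 0 with a + b ≥ 1, and let p be a nonzero polynomial in the variables z₁,…,z_a, w₁,…,w_b with complex coefficients, regarded as an element of the polynomial ring ℂ[z₁,…,z_a, w₁,…,w_b, ξ, η] not involving ξ and η. Then the polynomial q = p − ξ·η is irreducible in ℂ[z₁,…,z_a, w₁,…,w_b, ξ, η]. -/
noncomputable section

open MvPolynomial

/-!
As a polynomial in `ξ`, the difference `p - ξη` has degree one with coefficients `-η` and `p`. The
prime `η` does not divide `p`, which is nonzero and free of `η`, so these coefficients are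
relatively prime and no nonunit factor free of `ξ` can be split off.
-/

section CommSemiring

variable {σ τ R : Type*} [CommSemiring R]

lemma not_X_dvd_of_notMem_vars {p : MvPolynomial σ R} {i : σ} (hp : p ≠ 0) (hi : i ∉ p.vars) :
    ¬ X i ∣ p := by
  obtain ⟨m, hm⟩ := support_nonempty.2 hp
  have hmi : ¬ Finsupp.single i 1 ≤ m := by
    simp [Finsupp.single_le_iff, mem_support_notMem_vars_zero hm hi]
  rw [X_dvd_iff_modMonomial_eq_zero]
  intro hmod
  have hcoeff : coeff m p = 0 := by
    rw [← coeff_modMonomial_of_not_le p hmi, hmod, coeff_zero]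
  exact mem_support_iff.1 hm hcoeff

lemma notMem_vars_rename {f : σ → τ} {j : τ} (hj : j ∉ Set.range f) (p : MvPolynomial σ R) :
    j ∉ (rename f p).vars := by
  intro h
  obtain ⟨i, -, hij⟩ := mem_vars_rename f p h
  exact hj ⟨i, hij⟩

end CommSemiring

theorem prop_2_7_general {σ R : Type*} [CommRing R] [IsDomain R] {p : MvPolynomial σ R} {i j : σ}
    (hij : i ≠ j) (hi : i ∉ p.vars) (hj : ¬ X j ∣ p) : Irreducible (p - X i * X j) := by
  have hcoprime : IsRelPrime (-X j) p :=
    (X_prime.irreducible.isRelPrime_iff_not_dvd.2 hj).neg_left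
  have hi' : i ∉ (-X j : MvPolynomial σ R).vars := by simpa [vars_neg, vars_X] using hij
  have hlinear : p - X i * X j = -X j * X i + p := by ring
  rw [hlinear]
  exact irreducible_mul_X_add (-X j) p i (neg_ne_zero.2 (X_ne_zero j)) hi' hi hcoprime

/-- Proposition 2.7 of the paper: for a nonzero polynomial `p` in the variables
`z₁,…,z_a, w₁,…,w_b` (with `a + b ≥ 1`), regarded inside
`ℂ[z₁,…,z_a, w₁,…,w_b, ξ, η]`, the polynomial `p − ξ·η` is irreducible. -/
theorem prop_2_7 (a b : ℕ) (hab : 1 ≤ a + b)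
    (p : MvPolynomial (Fin a ⊕ Fin b) ℂ) (hp : p ≠ 0) :
    Irreducible
      ((MvPolynomial.rename Sum.inl p -
        MvPolynomial.X (Sum.inr 0) * MvPolynomial.X (Sum.inr 1) :
          MvPolynomial ((Fin a ⊕ Fin b) ⊕ Fin 2) ℂ)) := by
  have hvars (k : Fin 2) : Sum.inr k ∉ (rename Sum.inl p).vars := notMem_vars_rename (by simp) p
  exact prop_2_7_general (by simp) (hvars 0) (not_X_dvd_of_notMem_vars
    ((map_ne_zero_iff _ (rename_injective _ Sum.inl_injective)).2 hp) (hvars 1))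
end
end

section
/- Let n ≥ 1 and let k₁,…,kₙ be positive integers. Define the complexified generic norm ρ(z,w) = ∏_{j=1}^n (1 − z_j w_j)^{k_j} for z, w ∈ ℂⁿ. For (w,η) ∈ ℂⁿ × ℂ let Q_{(w,η)} = {(z,ξ) ∈ ℂⁿ × ℂ : ρ(z,w) − ξ·η = 0}. If (w,η), (w′,η′) ∈ ℂⁿ × ℂ with η ≠ 0 and Q_{(w,η)} ⊆ Q_{(w′,η′)}, then w = w′ and η = η′. -/
noncomputable section

open Complex

/-- The complexified generic norm `ρ(z,w) = ∏_j (1 − z_j w_j)^{k_j}` of the polydisc. -/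
def rhoC {n : ℕ} (k : Fin n → ℕ) (z w : Fin n → ℂ) : ℂ :=
  ∏ j, (1 - z j * w j) ^ (k j)

/-- The Segre variety `Q_{(w,η)} = {(z,ξ) : ρ(z,w) − ξ·η = 0}`. -/
def segre {n : ℕ} (k : Fin n → ℕ) (w : Fin n → ℂ) (η : ℂ) : Set ((Fin n → ℂ) × ℂ) :=
  {P | rhoC k P.1 w - P.2 * η = 0}

/-!
For `η ≠ 0` the Segre variety `Q_{(w,η)}` is the graph of `z ↦ ρ(z,w) / η`, so an inclusion
`Q_{(w,η)} ⊆ Q_{(w',η')}` says that `ρ(z,w') η = ρ(z,w) η'` for every `z`. At `z = 0` this reads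
`η = η'`. Hence `ρ(·,w) = ρ(·,w')`, and `w_j` is recovered from the zero set of `ρ(·,w)` on the
`j`-th coordinate axis, which is the point `1 / w_j`, or empty if `w_j = 0`.
-/

theorem eq_of_forall_mul_eq_one_iff {G₀ : Type*} [GroupWithZero G₀] {a b : G₀}
    (h : ∀ t, t * a = 1 ↔ t * b = 1) : a = b := by
  obtain rfl | ha := eq_or_ne a 0
  · by_contra hb
    have : b⁻¹ * 0 = 1 := (h b⁻¹).2 (inv_mul_cancel₀ (Ne.symm hb))
    simp at this
  · exact (inv_mul_eq_one₀ ha).1 ((h a⁻¹).1 (inv_mul_cancel₀ ha))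

section

variable {n : ℕ} {k : Fin n → ℕ}

theorem rhoC_zero_left (w : Fin n → ℂ) : rhoC k 0 w = 1 := by
  simp [rhoC]

theorem rhoC_single_left (j : Fin n) (t : ℂ) (w : Fin n → ℂ) :
    rhoC k (Pi.single j t) w = (1 - t * w j) ^ k j := by
  rw [rhoC, Fintype.prod_eq_single j fun i hij => by simp [hij], Pi.single_eq_same]

theorem rhoC_single_left_eq_zero_iff {j : Fin n} (hj : k j ≠ 0) {t : ℂ} {w : Fin n → ℂ} :
    rhoC k (Pi.single j t) w = 0 ↔ t * w j = 1 := by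
  rw [rhoC_single_left, pow_eq_zero_iff hj, sub_eq_zero, eq_comm]

theorem rhoC_right_injective (hk : ∀ j, k j ≠ 0) :
    Function.Injective fun w z => rhoC k z w := by
  intro w w' h
  ext1 j
  refine eq_of_forall_mul_eq_one_iff fun t => ?_
  have ht : rhoC k (Pi.single j t) w = rhoC k (Pi.single j t) w' := congrFun h (Pi.single j t)
  rw [← rhoC_single_left_eq_zero_iff (hk j), ← rhoC_single_left_eq_zero_iff (hk j), ht]

theorem mem_segre_iff {w : Fin n → ℂ} {η : ℂ} {P : (Fin n → ℂ) × ℂ} :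
    P ∈ segre k w η ↔ rhoC k P.1 w = P.2 * η :=
  sub_eq_zero

theorem rhoC_mul_eq_rhoC_mul_of_segre_subset {w w' : Fin n → ℂ} {η η' : ℂ} (hη : η ≠ 0)
    (hsub : segre k w η ⊆ segre k w' η') (z : Fin n → ℂ) :
    rhoC k z w' * η = rhoC k z w * η' := by
  have hmem : (z, rhoC k z w / η) ∈ segre k w η :=
    mem_segre_iff.2 (div_mul_cancel₀ _ hη).symm
  have hmem' : rhoC k z w' = rhoC k z w / η * η' := mem_segre_iff.1 (hsub hmem)
  rw [hmem', mul_right_comm, div_mul_cancel₀ _ hη]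

end

/-- Proposition 2.17(b) of the paper, specialized to the polydisc: if one Segre variety
with nonzero `η`-coordinate base point is contained in another, the base points agree. -/
theorem segre_determines_point (n : ℕ) (hn : 1 ≤ n)
    (k : Fin n → ℕ) (hk : ∀ j, 0 < k j)
    (w w' : Fin n → ℂ) (η η' : ℂ) (hη : η ≠ 0)
    (hsub : segre k w η ⊆ segre k w' η') :
    w = w' ∧ η = η' := by
  have hrho : ∀ z, rhoC k z w' * η = rhoC k z w * η' :=
    rhoC_mul_eq_rhoC_mul_of_segre_subset hη hsub
  obtain rfl : η = η' := by simpa only [rhoC_zero_left, one_mul] using hrho 0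
  have hrho_eq : (fun z => rhoC k z w) = fun z => rhoC k z w' :=
    funext fun z => (mul_right_cancel₀ hη (hrho z)).symm
  exact ⟨rhoC_right_injective (fun j => (hk j).ne') hrho_eq, rfl⟩
end
end
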